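/- arXiv:2504.03113 — 2 statements merged into one kernel-verified Lean document; each statement's English description precedes it below -/
import Mathlib

section
/- Each of the following three families of elements of H⁺, indexed without repetition by pairs (u, w) where u assigns to each i ≥ 1 a finite word u_i in {X_i, Y_i} with u_i empty for all but finitely many i and w is a permutation of {1,2,…} moving only finitely many points, is a K-vector-space basis of H⁺: (i) the family u_k⋯u₂u₁T_w; (ii) the family T_w u₁u₂⋯u_k; (iii) the family T_w u_k⋯u₂u₁ (where k is large enough that w ∈ S_k and u_i is empty for i > k). -/
/-!
The proof has two halves: a representation of `H⁺` which shows that the standard words are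
independent, and a dimension count which turns independence into spanning.

**The representation.** Over a commutative ring with parameters `t`, `h`, `t (t - h) = 1`, the algebra
acts on the free module with basis the sequences `f : ℕ → List Bool` of words in two letters (`true`
for `X`, `false` for `Y`), one word for each site. `X_0` and `Y_0` prepend a letter at site `0`, and
`T_i` acts on the sites `i`, `i + 1` through a two-site operator defined by recursion on the number
of letters: it is `t` on the empty words, and the relations `S_b b_1 = b_2 S_b⁻¹`, with `S_Y = T` and
`S_X = T⁻¹`, move it past a leading letter. That `S_Y` and `S_X` are inverse to each other is
`two_site`. The braid relation concerns three sites; it is proved together with the commutation of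
the third-site letters with the first `T` and the exchange relations between the third and second
site letters, by one induction on the number of letters (`BCD`). This gives `repHom`.

**Independence.** With `t = 1 + z` in `ℚ⟦z⟧` and `h = t - t⁻¹`, which lies in the maximal ideal,
everything is defined over `ℚ⟦z⟧` and specialises to `t = 1`, `h = 0`. There `T_i` just exchanges the
words at the sites `i`, `i + 1`, and `X_i`, `Y_i` prepend a letter at site `i`, so a product of
generators maps a basis state to a basis state. Starting from the suffix code `code`, standard words
of one type reach pairwise different states, for each of the three types. So the matrix of
coefficients is the identity modulo the maximal ideal, and the standard words are independent
(`descent`, `indep_of_act`, `stdWord_indep`).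

**Spanning.** Let `Qs n d` be the span of the products `u_0 u_1 ⋯ u_{n-1} z` with words of total length
`d` and `z` in the Hecke algebra of `S_n`. Straightening at two adjacent sites (`N2_straighten`) shows
that `T_i` preserves `Qs n d` and that the letters at sites `i < n` map it to `Qs n (d + 1)`. Hence the
`Qs n d` together span `H⁺`, and the standard words of every type with `w ∈ S_n`, `u_i` empty for
`i ≥ n` and total length `d` lie in `Qs n d`; here it is used that a reduced word of `w ∈ S_n` involves
only `T_i` with `i + 1 < n`. Their number is `n!` times the number of choices for `u`. This is an upper
bound for the dimension of `Qs n d`, since the Hecke algebra of `S_n` is spanned by `n!` elements.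
Being independent, these standard words span `Qs n d`.
-/

/-!
STATEMENT 0: The standard words form a basis of the stable limit DAHA `H⁺` over `K = ℚ(h)`.
Generator index `i : ℕ` represents the paper's index `i + 1 ≥ 1`.
-/

noncomputable section

abbrev Kfield : Type := RatFunc ℚ

/-- The variable `h` of `K = ℚ(h)`. -/
def hvar : Kfield := RatFunc.X

/-- Generators of the stable limit DAHA; index `i : ℕ` stands for the paper index `i + 1`. -/
inductive HGen : Type
  | T : ℕ → HGen
  | T' : ℕ → HGen
  | X : ℕ → HGen
  | Y : ℕ → HGen

open FreeAlgebra in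
/-- The defining relations of the stable limit DAHA `H⁺`. -/
inductive HRel : FreeAlgebra Kfield HGen → FreeAlgebra Kfield HGen → Prop
  | TT' (i : ℕ) : HRel (ι Kfield (HGen.T i) * ι Kfield (HGen.T' i)) 1
  | T'T (i : ℕ) : HRel (ι Kfield (HGen.T' i) * ι Kfield (HGen.T i)) 1
  | TminusT' (i : ℕ) :
      HRel (ι Kfield (HGen.T i) - ι Kfield (HGen.T' i))
        (algebraMap Kfield (FreeAlgebra Kfield HGen) hvar)
  | Tcomm (i j : ℕ) (hij : i + 1 < j ∨ j + 1 < i) :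
      HRel (ι Kfield (HGen.T i) * ι Kfield (HGen.T j))
        (ι Kfield (HGen.T j) * ι Kfield (HGen.T i))
  | braid (i : ℕ) :
      HRel (ι Kfield (HGen.T i) * ι Kfield (HGen.T (i + 1)) * ι Kfield (HGen.T i))
        (ι Kfield (HGen.T (i + 1)) * ι Kfield (HGen.T i) * ι Kfield (HGen.T (i + 1)))
  | TXT (i : ℕ) :
      HRel (ι Kfield (HGen.T' i) * ι Kfield (HGen.X i) * ι Kfield (HGen.T' i))
        (ι Kfield (HGen.X (i + 1)))
  | TX (i j : ℕ) (h1 : j ≠ i) (h2 : j ≠ i + 1) :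
      HRel (ι Kfield (HGen.T i) * ι Kfield (HGen.X j))
        (ι Kfield (HGen.X j) * ι Kfield (HGen.T i))
  | XX (i j : ℕ) :
      HRel (ι Kfield (HGen.X i) * ι Kfield (HGen.X j))
        (ι Kfield (HGen.X j) * ι Kfield (HGen.X i))
  | TYT (i : ℕ) :
      HRel (ι Kfield (HGen.T i) * ι Kfield (HGen.Y i) * ι Kfield (HGen.T i))
        (ι Kfield (HGen.Y (i + 1)))
  | TY (i j : ℕ) (h1 : j ≠ i) (h2 : j ≠ i + 1) :
      HRel (ι Kfield (HGen.T i) * ι Kfield (HGen.Y j))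
        (ι Kfield (HGen.Y j) * ι Kfield (HGen.T i))
  | YY (i j : ℕ) :
      HRel (ι Kfield (HGen.Y i) * ι Kfield (HGen.Y j))
        (ι Kfield (HGen.Y j) * ι Kfield (HGen.Y i))
  | cross :
      HRel (ι Kfield (HGen.Y 0) * ι Kfield (HGen.T 0) * ι Kfield (HGen.X 0))
        (ι Kfield (HGen.X 1) * ι Kfield (HGen.Y 0) * ι Kfield (HGen.T 0))

/-- The stable limit DAHA `H⁺`. -/
abbrev Hplus : Type := RingQuot HRel

/-- The image in `H⁺` of a generator. -/
def gen (g : HGen) : Hplus := RingQuot.mkAlgHom Kfield HRel (FreeAlgebra.ι Kfield g)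

/-- A letter of the two-letter alphabet `{X_i, Y_i}`: `true ↦ X_i`, `false ↦ Y_i`. -/
def letterElem (i : ℕ) (b : Bool) : Hplus := if b then gen (HGen.X i) else gen (HGen.Y i)

/-- The element of `H⁺` corresponding to a word `u` in the alphabet `{X_i, Y_i}`. -/
def wordElem (i : ℕ) (u : List Bool) : Hplus := (u.map (letterElem i)).prod

/-- Permutations of `{1, 2, …}` (here realized as `ℕ`) moving only finitely many points. -/
def FinPerm : Type := {w : Equiv.Perm ℕ // {i | w i ≠ i}.Finite}

/-- The adjacent transposition `s_i = (i, i+1)`. -/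
def swapAdj (i : ℕ) : Equiv.Perm ℕ := Equiv.swap i (i + 1)

/-- The permutation `s_{i₁} ⋯ s_{i_ℓ}` represented by a list of indices. -/
def wordPerm (l : List ℕ) : Equiv.Perm ℕ := (l.map swapAdj).prod

/-- The element `T_{i₁} ⋯ T_{i_ℓ}` of `H⁺` attached to a list of indices. -/
def Tword (l : List ℕ) : Hplus := (l.map (fun i => gen (HGen.T i))).prod

instance : Zero (List Bool) := ⟨[]⟩

/-- The ordered product `u₁ u₂ ⋯ u_k` in `H⁺`. -/
def uProd (u : ℕ →₀ List Bool) (k : ℕ) : Hplus :=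
  ((List.range k).map (fun i => wordElem i (u i))).prod


/-- The reversed ordered product `u_k ⋯ u₂ u₁` in `H⁺`. -/
def uProdRev (u : ℕ →₀ List Bool) (k : ℕ) : Hplus :=
  ((List.range k).reverse.map (fun i => wordElem i (u i))).prod

/-- The standard word of type (i): `u_k ⋯ u₂ u₁ T_w`. -/
def stdWordI (rw : FinPerm → List ℕ) (u : ℕ →₀ List Bool) (w : FinPerm) : Hplus :=
  uProdRev u (u.support.sup id + 1) * Tword (rw w)

/-- The standard word of type (ii): `T_w u₁ u₂ ⋯ u_k`. -/
def stdWordII (rw : FinPerm → List ℕ) (u : ℕ →₀ List Bool) (w : FinPerm) : Hplus :=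
  Tword (rw w) * uProd u (u.support.sup id + 1)

/-- The standard word of type (iii): `T_w u_k ⋯ u₂ u₁`. -/
def stdWordIII (rw : FinPerm → List ℕ) (u : ℕ →₀ List Bool) (w : FinPerm) : Hplus :=
  Tword (rw w) * uProdRev u (u.support.sup id + 1)

namespace SLD

/-! ### The two-site operators -/

section TwoSite

variable {k : Type*} [CommRing k]

/-- The free module on pairs of words, the two-site state space. -/
abbrev P2 (k : Type*) [CommRing k] : Type _ := (List Bool × List Bool) →₀ k

/-- The state given by a pair of words. -/
abbrev s2 (k : Type*) [CommRing k] (p q : List Bool) : P2 k := Finsupp.single (p, q) 1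

/-- Prepending a letter to the first word. -/
def pre1 (k : Type*) [CommRing k] (a : Bool) : P2 k →ₗ[k] P2 k :=
  Finsupp.lmapDomain k k (fun w => (a :: w.1, w.2))

/-- Prepending a letter to the second word. -/
def pre2 (k : Type*) [CommRing k] (a : Bool) : P2 k →ₗ[k] P2 k :=
  Finsupp.lmapDomain k k (fun w => (w.1, a :: w.2))

/-- The constant `c_b` with `S_b = T - c_b`, where `true` stands for the letter `X` and `false`
for the letter `Y`. -/
def cb (h : k) (b : Bool) : k := if b then h else 0

/-- The operator `T` on a basis state of degree `d + 1`, in terms of `T` and the operators `L a`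
(the letter `a` at the second site) on states of degree `d`: the relations `b_1 S_b = S_b⁻¹ b_2`
and `S_b b_1 = b_2 S_b⁻¹` move `T` past the leading letter. In degree `0` it is `t`. -/
def rawT (t h : k) (T : P2 k →ₗ[k] P2 k) (L : Bool → P2 k →ₗ[k] P2 k) :
    List Bool → List Bool → P2 k
  | [], [] => t • s2 k [] []
  | [], b :: q => pre1 k b (T (s2 k [] q) - cb h b • s2 k [] q) + cb h (!b) • s2 k [] (b :: q)
  | b :: p, q => L b (T (s2 k p q) - cb h (!b) • s2 k p q) + cb h b • s2 k (b :: p) q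

/-- The letter `a` at the second site on a basis state of degree `d + 1`, in terms of the operators
in degree `d`: the letter is moved past the leading letter of the first word. -/
def rawL (h : k) (T : P2 k →ₗ[k] P2 k) (L : Bool → P2 k →ₗ[k] P2 k) (a : Bool) :
    List Bool → List Bool → P2 k
  | [], q => s2 k [] (a :: q)
  | b :: p, q => pre1 k b (L a (s2 k p q)) + if a = b then 0 else
      (cb h (!b) - cb h b) • pre1 k b (pre1 k a (T (s2 k p q) - cb h (!b) • s2 k p q))

/-- The operators `T` and `a_2` in degree `d`, by recursion on `d`; the values on states of other
degrees are irrelevant. -/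
def raw (t h : k) : ℕ → (P2 k →ₗ[k] P2 k) × (Bool → P2 k →ₗ[k] P2 k)
  | 0 => (t • LinearMap.id, pre2 k)
  | d + 1 =>
    (Finsupp.linearCombination k (fun w => rawT t h (raw t h d).1 (raw t h d).2 w.1 w.2),
     fun a => Finsupp.linearCombination k (fun w => rawL h (raw t h d).1 (raw t h d).2 a w.1 w.2))

/-- The total number of letters of a pair of words. -/
def deg2 (w : List Bool × List Bool) : ℕ := w.1.length + w.2.length

/-- The two-site states of degree `d`. -/
def V2 (k : Type*) [CommRing k] (d : ℕ) : Submodule k (P2 k) :=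
  Finsupp.supported k k {w | deg2 w = d}

/-- The two-site operator `T`, glued from its homogeneous parts. -/
def TT (t h : k) : P2 k →ₗ[k] P2 k :=
  Finsupp.linearCombination k (fun w => (raw t h (deg2 w)).1 (Finsupp.single w 1))

/-- The two-site operator `a_2`, the action of the letter `a` at the second site. -/
def LL (t h : k) (a : Bool) : P2 k →ₗ[k] P2 k :=
  Finsupp.linearCombination k (fun w => (raw t h (deg2 w)).2 a (Finsupp.single w 1))

lemma V2_single {p q : List Bool} {d : ℕ} (hd : p.length + q.length = d) :
    s2 k p q ∈ V2 k d :=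
  Finsupp.single_mem_supported k 1 hd

/-- Induction principle: a linear condition on `V2 k d` may be tested on basis states. -/
lemma V2_induct {d : ℕ} {N : Submodule k (P2 k)}
    (H : ∀ p q : List Bool, p.length + q.length = d → s2 k p q ∈ N) {x : P2 k} (hx : x ∈ V2 k d) :
    x ∈ N := by
  rw [V2, Finsupp.supported_eq_span_single] at hx
  refine (Submodule.span_le.2 ?_) hx
  rintro _ ⟨⟨p, q⟩, hw, rfl⟩
  exact H p q hw

lemma P2_ext {f g : P2 k →ₗ[k] P2 k} (H : ∀ p q, f (s2 k p q) = g (s2 k p q)) : f = g := by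
  apply Finsupp.lhom_ext'
  rintro ⟨p, q⟩
  ext
  simpa using DFunLike.congr_fun (H p q) _

lemma pre1_single (a : Bool) (p q : List Bool) : pre1 k a (s2 k p q) = s2 k (a :: p) q := by
  simp [pre1, Finsupp.mapDomain_single]

lemma pre2_single (a : Bool) (p q : List Bool) : pre2 k a (s2 k p q) = s2 k p (a :: q) := by
  simp [pre2, Finsupp.mapDomain_single]

lemma pre1_mem (a : Bool) {d : ℕ} {x : P2 k} (hx : x ∈ V2 k d) : pre1 k a x ∈ V2 k (d + 1) := by
  refine V2_induct (N := (V2 k (d + 1)).comap (pre1 k a)) (fun p q hpq => ?_) hx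
  rw [Submodule.mem_comap, pre1_single]
  exact V2_single (by simp; omega)

variable (t h : k)

lemma raw_hom (d : ℕ) : (∀ x ∈ V2 k d, (raw t h d).1 x ∈ V2 k d) ∧
    (∀ a, ∀ x ∈ V2 k d, (raw t h d).2 a x ∈ V2 k (d + 1)) := by
  induction d with
  | zero =>
    refine ⟨fun x hx => Submodule.smul_mem _ _ hx, fun a x hx => ?_⟩
    refine V2_induct (N := (V2 k (0 + 1)).comap (pre2 k a)) (fun p q hpq => ?_) hx
    rw [Submodule.mem_comap, pre2_single]
    exact V2_single (by simp; omega)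
  | succ d ih =>
    obtain ⟨ihT, ihL⟩ := ih
    constructor
    · intro x hx
      refine V2_induct (N := (V2 k (d + 1)).comap (raw t h (d + 1)).1) (fun p q hpq => ?_) hx
      rw [Submodule.mem_comap]
      simp only [raw, Finsupp.linearCombination_single, one_smul]
      match p, q, hpq with
      | [], b :: q, hpq =>
        have h1 : s2 k [] q ∈ V2 k d := V2_single (by simpa using hpq)
        exact Submodule.add_mem _
          (pre1_mem b (Submodule.sub_mem _ (ihT _ h1) (Submodule.smul_mem _ _ h1)))
          (Submodule.smul_mem _ _ (V2_single hpq))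
      | b :: p, q, hpq =>
        have h1 : s2 k p q ∈ V2 k d := V2_single (by simp at hpq; omega)
        exact Submodule.add_mem _
          (ihL b _ (Submodule.sub_mem _ (ihT _ h1) (Submodule.smul_mem _ _ h1)))
          (Submodule.smul_mem _ _ (V2_single hpq))
    · intro a x hx
      refine V2_induct (N := (V2 k (d + 1 + 1)).comap ((raw t h (d + 1)).2 a))
        (fun p q hpq => ?_) hx
      rw [Submodule.mem_comap]
      simp only [raw, Finsupp.linearCombination_single, one_smul]
      match p, q, hpq with
      | [], q, hpq => exact V2_single (by simp at hpq ⊢; omega)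
      | b :: p, q, hpq =>
        have h1 : s2 k p q ∈ V2 k d := V2_single (by simp at hpq; omega)
        refine Submodule.add_mem _ (pre1_mem b (ihL a _ h1)) ?_
        split_ifs
        · exact Submodule.zero_mem _
        · exact Submodule.smul_mem _ _ (pre1_mem b (pre1_mem a
            (Submodule.sub_mem _ (ihT _ h1) (Submodule.smul_mem _ _ h1))))

lemma TT_raw {d : ℕ} {x : P2 k} (hx : x ∈ V2 k d) : TT t h x = (raw t h d).1 x := by
  refine V2_induct (N := LinearMap.eqLocus (TT t h) (raw t h d).1) (fun p q hpq => ?_) hx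
  rw [LinearMap.mem_eqLocus, TT, Finsupp.linearCombination_single, one_smul]
  rw [show deg2 (p, q) = d from hpq]

lemma LL_raw (a : Bool) {d : ℕ} {x : P2 k} (hx : x ∈ V2 k d) :
    LL t h a x = (raw t h d).2 a x := by
  refine V2_induct (N := LinearMap.eqLocus (LL t h a) ((raw t h d).2 a)) (fun p q hpq => ?_) hx
  rw [LinearMap.mem_eqLocus, LL, Finsupp.linearCombination_single, one_smul]
  rw [show deg2 (p, q) = d from hpq]

lemma TT_mem {d : ℕ} {x : P2 k} (hx : x ∈ V2 k d) : TT t h x ∈ V2 k d := by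
  rw [TT_raw t h hx]; exact (raw_hom t h d).1 x hx

lemma LL_mem (a : Bool) {d : ℕ} {x : P2 k} (hx : x ∈ V2 k d) : LL t h a x ∈ V2 k (d + 1) := by
  rw [LL_raw t h a hx]; exact (raw_hom t h d).2 a x hx

lemma TT_nil : TT t h (s2 k [] []) = t • s2 k [] [] := by
  simp [TT, deg2, raw]

lemma LL_nil (a : Bool) (q : List Bool) : LL t h a (s2 k [] q) = s2 k [] (a :: q) := by
  rw [LL_raw t h a (V2_single (d := q.length) (by simp))]
  cases q with
  | nil => simp [raw, pre2, Finsupp.mapDomain_single]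
  | cons b q => simp [raw, rawL]

/-- `S_b = T - c_b`: the operator `T` for `b = Y` and its inverse for `b = X`. -/
def SS (b : Bool) : P2 k →ₗ[k] P2 k := TT t h - cb h b • LinearMap.id

lemma SS_apply (b : Bool) (x : P2 k) : SS t h b x = TT t h x - cb h b • x := rfl

lemma SS_mem (b : Bool) {d : ℕ} {x : P2 k} (hx : x ∈ V2 k d) : SS t h b x ∈ V2 k d :=
  Submodule.sub_mem _ (TT_mem t h hx) (Submodule.smul_mem _ _ hx)

lemma SS_not (b : Bool) (x : P2 k) :
    SS t h (!b) x = SS t h b x - (cb h (!b) - cb h b) • x := by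
  simp only [SS_apply, sub_smul]; abel

/-- `S_b b_1 = b_2 S_b⁻¹`. -/
lemma SS_pre1 (b : Bool) (x : P2 k) :
    SS t h b (pre1 k b x) = LL t h b (SS t h (!b) x) := by
  suffices SS t h b ∘ₗ pre1 k b = LL t h b ∘ₗ SS t h (!b) from LinearMap.congr_fun this x
  apply P2_ext
  intro p q
  have h1 : s2 k p q ∈ V2 k (p.length + q.length) := V2_single rfl
  rw [LinearMap.comp_apply, LinearMap.comp_apply, pre1_single, SS_apply,
    LL_raw t h b (SS_mem t h (!b) h1), SS_apply, TT_raw t h h1,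
    TT_raw t h (V2_single (d := p.length + q.length + 1) (by simp; omega))]
  simp [raw, rawT]

/-- `S_b⁻¹ b_2 = b_1 S_b` on states with empty first word. -/
lemma SS_nil (b : Bool) (q : List Bool) :
    SS t h (!b) (s2 k [] (b :: q)) = pre1 k b (SS t h b (s2 k [] q)) := by
  have h1 : s2 k [] q ∈ V2 k q.length := V2_single (by simp)
  rw [SS_apply, SS_apply, TT_raw t h h1,
    TT_raw t h (V2_single (d := q.length + 1) (by simp))]
  simp [raw, rawT]

/-- The exchange relation between `a_2` and `b_1`. -/
lemma LL_pre1 (a b : Bool) (x : P2 k) : LL t h a (pre1 k b x) = pre1 k b (LL t h a x) +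
    if a = b then 0 else (cb h (!b) - cb h b) • pre1 k b (pre1 k a (SS t h (!b) x)) := by
  suffices LL t h a ∘ₗ pre1 k b = pre1 k b ∘ₗ LL t h a + if a = b then 0 else
      (cb h (!b) - cb h b) • pre1 k b ∘ₗ pre1 k a ∘ₗ SS t h (!b) by
    have := LinearMap.congr_fun this x
    split_ifs at this ⊢ <;> simpa using this
  apply P2_ext
  intro p q
  have h1 : s2 k p q ∈ V2 k (p.length + q.length) := V2_single rfl
  rw [LinearMap.comp_apply, pre1_single, LinearMap.add_apply, LinearMap.comp_apply,
    LL_raw t h a h1, LL_raw t h a (V2_single (d := p.length + q.length + 1) (by simp; omega))]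
  split_ifs with hab
  · simp [raw, rawL, hab]
  · rw [LinearMap.smul_apply, LinearMap.comp_apply, LinearMap.comp_apply, SS_apply,
      TT_raw t h h1]
    simp [raw, rawL, hab]

variable {t h}

/-- `a_2` commutes with `a_1`. -/
lemma LL_pre1_same (a : Bool) (x : P2 k) :
    LL t h a (pre1 k a x) = pre1 k a (LL t h a x) := by
  simp [LL_pre1]

lemma LL_pre1_ne (b : Bool) (x : P2 k) :
    LL t h (!b) (pre1 k b x) = pre1 k b (LL t h (!b) x) +
      (cb h (!b) - cb h b) • pre1 k b (pre1 k (!b) (SS t h (!b) x)) := by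
  simp [LL_pre1]

variable (ht : t * (t - h) = 1)
include ht

/-- The defining recursion implies that `S_b` is inverse to `S_{!b}` and that
`S_a⁻¹ a_2 = a_1 S_a`, by simultaneous induction on the degree. -/
lemma two_site (d : ℕ) :
    (∀ x ∈ V2 k d, ∀ b, SS t h (!b) (SS t h b x) = x) ∧
    (∀ x ∈ V2 k d, ∀ a, SS t h (!a) (LL t h a x) = pre1 k a (SS t h a x)) := by
  -- commutation of the two one-sided inverses, so that one value of `b` suffices
  have key : ∀ x : P2 k, ∀ b, SS t h (!b) (SS t h b x) = SS t h b (SS t h (!b) x) := by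
    intro x b
    simp only [SS_apply, map_sub, map_smul, smul_sub, smul_comm (cb h b) (cb h (!b)) x]
    abel
  have key2 : ∀ (x : P2 k) (b c), SS t h (!b) (SS t h b x) = x → SS t h (!c) (SS t h c x) = x := by
    intro x b c hx
    cases b <;> cases c <;> first | exact hx | (rw [key]; exact hx)
  induction d with
  | zero =>
    constructor
    · intro x hx b
      refine V2_induct (N := LinearMap.eqLocus (SS t h (!b) ∘ₗ SS t h b) LinearMap.id)
        (fun p q hpq => ?_) hx
      have hp : p = [] := List.length_eq_zero_iff.1 (by omega)
      have hq : q = [] := List.length_eq_zero_iff.1 (by omega)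
      subst hp hq
      rw [LinearMap.mem_eqLocus]
      refine key2 _ false b ?_
      simp only [SS_apply, TT_nil, map_sub, map_smul, cb]
      simp only [Bool.not_false, if_true, Bool.false_eq_true, if_false, smul_smul, ← sub_smul]
      rw [show t * (t - h) - 0 * (t - h) = 1 by linear_combination ht, one_smul]
    · intro x hx a
      refine V2_induct (N := LinearMap.eqLocus (SS t h (!a) ∘ₗ LL t h a) (pre1 k a ∘ₗ SS t h a))
        (fun p q hpq => ?_) hx
      have hp : p = [] := List.length_eq_zero_iff.1 (by omega)
      subst hp
      rw [LinearMap.mem_eqLocus, LinearMap.comp_apply, LL_nil, SS_nil]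
      rfl
  | succ d ih =>
    obtain ⟨ihQ, ihF⟩ := ih
    constructor
    · intro x hx b
      refine V2_induct (N := LinearMap.eqLocus (SS t h (!b) ∘ₗ SS t h b) LinearMap.id)
        (fun p q hpq => ?_) hx
      rw [LinearMap.mem_eqLocus]
      match p, q, hpq with
      | [], c :: q, hpq =>
        have h1 : s2 k [] q ∈ V2 k d := V2_single (by simpa using hpq)
        refine key2 _ (!c) b ?_
        rw [SS_nil, Bool.not_not, SS_pre1, ihQ _ h1, LL_nil]
      | c :: p, q, hpq =>
        have h1 : s2 k p q ∈ V2 k d := V2_single (by simp at hpq; omega)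
        refine key2 _ c b ?_
        rw [← pre1_single, SS_pre1, ihF _ (SS_mem t h _ h1)]
        congr 1
        simpa using ihQ _ h1 (!c)
    · intro x hx a
      refine V2_induct (N := LinearMap.eqLocus (SS t h (!a) ∘ₗ LL t h a) (pre1 k a ∘ₗ SS t h a))
        (fun p q hpq => ?_) hx
      rw [LinearMap.mem_eqLocus, LinearMap.comp_apply, LinearMap.comp_apply]
      match p, q, hpq with
      | [], q, hpq => rw [LL_nil, SS_nil]
      | b :: p, q, hpq =>
        have h1 : s2 k p q ∈ V2 k d := V2_single (by simp at hpq; omega)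
        rw [← pre1_single]
        generalize s2 k p q = w at h1
        by_cases hab : a = b
        · subst hab
          rw [LL_pre1_same, SS_not, SS_pre1, ihF _ h1, LL_pre1_same, SS_pre1, SS_not t h a w]
          simp only [map_sub, map_smul]
        · obtain rfl : a = !b := (by decide : ∀ a b : Bool, ¬a = b → a = !b) a b hab
          have e1 : SS t h (!b) (pre1 k (!b) (SS t h (!b) w)) = LL t h (!b) w := by
            rw [SS_pre1, Bool.not_not]
            congr 1
            simpa using ihQ _ h1 (!b)
          have e2 : SS t h (!b) (LL t h (!b) w) =
              pre1 k (!b) (SS t h (!b) w) - (cb h (!b) - cb h b) • LL t h (!b) w := by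
            rw [SS_not]
            have := ihF _ h1 (!b)
            rw [Bool.not_not] at this
            rw [this]
          have e3 : LL t h b (pre1 k (!b) (SS t h (!b) w)) =
              pre1 k (!b) (LL t h b (SS t h (!b) w)) -
                (cb h (!b) - cb h b) • pre1 k (!b) (pre1 k b w) := by
            have := LL_pre1_ne (t := t) (h := h) (!b) (SS t h (!b) w)
            rw [Bool.not_not] at this
            rw [this, show SS t h b (SS t h (!b) w) = w by simpa using ihQ _ h1 (!b),
              ← neg_sub (cb h (!b)) (cb h b), neg_smul, ← sub_eq_add_neg]
          have e4 : SS t h (!b) (pre1 k b w) =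
              LL t h b (SS t h (!b) w) - (cb h (!b) - cb h b) • pre1 k b w := by
            rw [SS_not, SS_pre1]
          rw [Bool.not_not, LL_pre1_ne, map_add, map_smul, SS_pre1, SS_pre1, e1, e2, e4]
          simp only [map_sub, map_smul]
          rw [e3]
          abel

lemma SS_inv (b : Bool) : SS t h (!b) * SS t h b = 1 := by
  apply P2_ext
  intro p q
  exact (two_site ht _).1 _ (V2_single rfl) b

lemma SS_inv' (b : Bool) : SS t h b * SS t h (!b) = 1 := by
  simpa using SS_inv ht (!b)

/-- `a_2 = S_a a_1 S_a`. -/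
lemma LL_eq (a : Bool) : LL t h a = SS t h a * pre1 k a * SS t h a := by
  refine LinearMap.ext fun x => ?_
  rw [Module.End.mul_apply, Module.End.mul_apply, SS_pre1]
  have := LinearMap.congr_fun (SS_inv ht a) x
  rw [Module.End.mul_apply] at this
  rw [this]; rfl

/-- `a_2 b_1 = b_1 S_b² a_2` for `a ≠ b`. -/
lemma LL_cross (b : Bool) :
    LL t h (!b) * pre1 k b = pre1 k b * SS t h b * SS t h b * LL t h (!b) := by
  apply P2_ext
  intro p q
  generalize hw : s2 k p q = w
  have h1 : w ∈ V2 k (p.length + q.length) := hw ▸ V2_single rfl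
  have h2 := (two_site ht _).2 w h1 (!b)
  rw [Bool.not_not] at h2
  have h4 := SS_not t h b (SS t h b (LL t h (!b) w))
  rw [← Module.End.mul_apply (SS t h (!b)), SS_inv ht] at h4
  simp only [Module.End.mul_apply, Module.End.one_apply] at h4 ⊢
  rw [LL_pre1_ne, ← h2, ← map_smul, ← map_add]
  congr 1
  exact eq_sub_iff_add_eq.1 h4
end TwoSite
end SLD

namespace SLD

/-! ### Local operators on the infinite tensor product -/

section Local

variable {k : Type*} [CommRing k]

/-- The free module on sequences of words, the state space of the representation. -/
abbrev PO (k : Type*) [CommRing k] : Type _ := (ℕ → List Bool) →₀ k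

/-- The state given by a sequence of words. -/
abbrev st (k : Type*) [CommRing k] (f : ℕ → List Bool) : PO k := Finsupp.single f 1

/-- Replacing the words at the sites `i` and `i + 1`. -/
def put (i : ℕ) (f : ℕ → List Bool) (w : List Bool × List Bool) : ℕ → List Bool :=
  Function.update (Function.update f i w.1) (i + 1) w.2

lemma put_left (i : ℕ) (f : ℕ → List Bool) (w) : put i f w i = w.1 := by simp [put]

lemma put_right (i : ℕ) (f : ℕ → List Bool) (w) : put i f w (i + 1) = w.2 := by simp [put]

lemma put_ne {i j : ℕ} (f : ℕ → List Bool) (w) (h1 : j ≠ i) (h2 : j ≠ i + 1) :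
    put i f w j = f j := by simp [put, h1, h2]

lemma put_put (i : ℕ) (f : ℕ → List Bool) (w w') : put i (put i f w) w' = put i f w' := by
  funext j
  by_cases h2 : j = i + 1
  · subst h2; simp only [put_right]
  by_cases h1 : j = i
  · subst h1; simp only [put_left]
  simp only [put_ne _ _ h1 h2]

lemma put_self (i : ℕ) (f : ℕ → List Bool) : put i f (f i, f (i + 1)) = f := by
  simp [put]

lemma put_comm {i j : ℕ} (hij : i + 1 < j) (f : ℕ → List Bool) (w w') :
    put i (put j f w) w' = put j (put i f w') w := by
  funext l
  simp only [put, Function.update_apply]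
  split_ifs <;> first | rfl | omega

/-- The two-site state space placed at the sites `i` and `i + 1` of the sequence `f`. -/
def emb (k : Type*) [CommRing k] (i : ℕ) (f : ℕ → List Bool) : P2 k →ₗ[k] PO k :=
  Finsupp.lmapDomain k k (put i f)

lemma emb_single (i : ℕ) (f : ℕ → List Bool) (p q : List Bool) :
    emb k i f (s2 k p q) = st k (put i f (p, q)) := by
  simp [emb, Finsupp.mapDomain_single]

lemma emb_put (i : ℕ) (f : ℕ → List Bool) (w) : emb k i (put i f w) = emb k i f := by
  simp only [emb]
  congr 1
  funext w'
  exact put_put i f w w'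

lemma PO_ext {F G : Module.End k (PO k)} (H : ∀ f, F (st k f) = G (st k f)) : F = G := by
  apply Finsupp.lhom_ext'
  intro f
  ext
  simpa using DFunLike.congr_fun (H f) _

/-- The linear map underlying `loc`. -/
def locFun (i : ℕ) (F : Module.End k (P2 k)) : Module.End k (PO k) :=
  Finsupp.linearCombination k (fun f => emb k i f (F (s2 k (f i) (f (i + 1)))))

lemma locFun_single (i : ℕ) (F : Module.End k (P2 k)) (f : ℕ → List Bool) :
    locFun i F (st k f) = emb k i f (F (s2 k (f i) (f (i + 1)))) := by
  simp [locFun]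

lemma locFun_emb (i : ℕ) (F : Module.End k (P2 k)) (f : ℕ → List Bool) (x : P2 k) :
    locFun i F (emb k i f x) = emb k i f (F x) := by
  suffices locFun i F ∘ₗ emb k i f = emb k i f ∘ₗ F from LinearMap.congr_fun this x
  apply Finsupp.lhom_ext'
  rintro ⟨p, q⟩
  apply LinearMap.ext_ring
  change locFun i F (emb k i f (s2 k p q)) = emb k i f (F (s2 k p q))
  rw [emb_single, locFun_single, put_left, put_right, emb_put]

/-- A two-site operator acting at the sites `i` and `i + 1`. -/
def loc (i : ℕ) : Module.End k (P2 k) →ₐ[k] Module.End k (PO k) :=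
  AlgHom.ofLinearMap
    { toFun := locFun i
      map_add' := fun F G => PO_ext fun f => by
        rw [LinearMap.add_apply]; simp only [locFun_single, LinearMap.add_apply, map_add]
      map_smul' := fun c F => PO_ext fun f => by
        simp only [locFun_single, LinearMap.smul_apply, map_smul, RingHom.id_apply] }
    (PO_ext fun f => by
      change locFun i 1 _ = _
      rw [locFun_single, Module.End.one_apply, emb_single, put_self, Module.End.one_apply])
    (fun F G => PO_ext fun f => by
      change locFun i (F * G) _ = locFun i F (locFun i G _)
      rw [locFun_single, locFun_single, locFun_emb, Module.End.mul_apply])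

lemma loc_single (i : ℕ) (F : Module.End k (P2 k)) (f : ℕ → List Bool) :
    loc i F (st k f) = emb k i f (F (s2 k (f i) (f (i + 1)))) := locFun_single i F f

lemma loc_emb (i : ℕ) (F : Module.End k (P2 k)) (f : ℕ → List Bool) (x : P2 k) :
    loc i F (emb k i f x) = emb k i f (F x) := locFun_emb i F f x

/-- Prepending a letter to the word at site `i`. -/
def Dop (k : Type*) [CommRing k] (i : ℕ) (a : Bool) : Module.End k (PO k) :=
  Finsupp.lmapDomain k k (fun f => Function.update f i (a :: f i))

lemma Dop_single (i : ℕ) (a : Bool) (f : ℕ → List Bool) :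
    Dop k i a (st k f) = st k (Function.update f i (a :: f i)) := by
  simp [Dop, Finsupp.mapDomain_single]

lemma loc_pre1 (i : ℕ) (a : Bool) : loc i (pre1 k a) = Dop k i a := by
  refine PO_ext fun f => ?_
  rw [loc_single, pre1_single, emb_single, Dop_single]
  congr 1
  funext j
  simp only [put, Function.update_apply]
  split_ifs with h1 <;> simp_all

lemma loc_Dop {i j : ℕ} (h1 : j ≠ i) (h2 : j ≠ i + 1) (F : Module.End k (P2 k)) (a : Bool) :
    loc i F * Dop k j a = Dop k j a * loc i F := by
  refine PO_ext fun f => ?_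
  rw [Module.End.mul_apply, Module.End.mul_apply, Dop_single, loc_single, loc_single,
    Function.update_of_ne h1.symm, Function.update_of_ne h2.symm]
  generalize F _ = x
  suffices emb k i (Function.update f j (a :: f j)) = Dop k j a ∘ₗ emb k i f from
    LinearMap.congr_fun this x
  apply Finsupp.lhom_ext'
  rintro ⟨p, q⟩
  apply LinearMap.ext_ring
  change emb k i _ (s2 k p q) = Dop k j a (emb k i f (s2 k p q))
  rw [emb_single, emb_single, Dop_single, put_ne _ _ h1 h2]
  congr 1
  funext l
  simp only [put, Function.update_apply]
  split_ifs <;> first | rfl | omega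

lemma Dop_comm {i j : ℕ} (hij : i ≠ j) (a b : Bool) :
    Dop k i a * Dop k j b = Dop k j b * Dop k i a := by
  refine PO_ext fun f => ?_
  simp only [Module.End.mul_apply, Dop_single, Function.update_of_ne hij,
    Function.update_of_ne hij.symm, Function.update_comm hij]

lemma loc_comm {i j : ℕ} (hij : i + 1 < j) (F G : Module.End k (P2 k)) :
    loc i F * loc j G = loc j G * loc i F := by
  refine PO_ext fun f => ?_
  rw [Module.End.mul_apply, Module.End.mul_apply, loc_single, loc_single]
  have e1 : ∀ y, loc i F (emb k j f y) = Finsupp.linearCombination k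
      (fun w => emb k i (put j f w) (F (s2 k (f i) (f (i + 1))))) y := by
    intro y
    induction y using Finsupp.induction_linear with
    | zero => simp only [map_zero]
    | add x y hx hy => simp only [map_add, hx, hy]
    | single w c =>
      rw [← mul_one c, ← smul_eq_mul, ← Finsupp.smul_single]
      simp only [map_smul]
      congr 1
      rw [Finsupp.linearCombination_single, one_smul]
      change loc i F (emb k j f (s2 k w.1 w.2)) = _
      rw [emb_single, loc_single, put_ne _ _ (by omega) (by omega),
        put_ne _ _ (by omega) (by omega)]
  have e2 : ∀ x, loc j G (emb k i f x) = Finsupp.linearCombination k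
      (fun w => emb k j (put i f w) (G (s2 k (f j) (f (j + 1))))) x := by
    intro y
    induction y using Finsupp.induction_linear with
    | zero => simp only [map_zero]
    | add x y hx hy => simp only [map_add, hx, hy]
    | single w c =>
      rw [← mul_one c, ← smul_eq_mul, ← Finsupp.smul_single]
      simp only [map_smul]
      congr 1
      rw [Finsupp.linearCombination_single, one_smul]
      change loc j G (emb k i f (s2 k w.1 w.2)) = _
      rw [emb_single, loc_single, put_ne _ _ (by omega) (by omega),
        put_ne _ _ (by omega) (by omega)]
  rw [e1, e2]
  generalize F _ = x
  generalize G _ = y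
  induction x using Finsupp.induction_linear with
  | zero => simp [Finsupp.linearCombination_apply]
  | add x x' hx hx' =>
    rw [map_add, ← hx, ← hx']
    simp only [Finsupp.linearCombination_apply, map_add, smul_add, Finsupp.sum_add]
  | single w c =>
    induction y using Finsupp.induction_linear with
    | zero => simp
    | add y y' hy hy' =>
      rw [map_add, hy, hy']
      simp only [Finsupp.linearCombination_apply, map_add, smul_add, Finsupp.sum_add]
    | single w' c' =>
      simp only [Finsupp.linearCombination_single]
      simp only [emb, Finsupp.lmapDomain_apply, Finsupp.mapDomain_single, Finsupp.smul_single,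
        smul_eq_mul, put_comm hij, mul_comm c c']

end Local
end SLD

namespace SLD

/-! ### The braid relation on three consecutive sites -/

section Braid

variable {k : Type*} [CommRing k]

/-- `S_b` acting at the sites `i` and `i + 1`. -/
def Sop (t h : k) (i : ℕ) (b : Bool) : Module.End k (PO k) := loc i (SS t h b)

/-- The letter `a` acting at the second of the sites `i`, `i + 1`, `i + 2`. -/
def A2 (t h : k) (i : ℕ) (a : Bool) : Module.End k (PO k) := loc i (LL t h a)

/-- The letter `a` acting at the third of the sites `i`, `i + 1`, `i + 2`. -/
def A3 (t h : k) (i : ℕ) (a : Bool) : Module.End k (PO k) :=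
  Sop t h (i + 1) a * A2 t h i a * Sop t h (i + 1) a

/-- The states with `d` letters at the sites `i`, `i + 1`, `i + 2`. -/
def V3 (k : Type*) [CommRing k] (i d : ℕ) : Submodule k (PO k) :=
  Finsupp.supported k k {f | (f i).length + (f (i + 1)).length + (f (i + 2)).length = d}

/-- The states with empty word at site `i`. -/
def Z3 (k : Type*) [CommRing k] (i : ℕ) : Submodule k (PO k) :=
  Finsupp.supported k k {f | f i = []}

lemma V3_single {i d : ℕ} {f : ℕ → List Bool}
    (hd : (f i).length + (f (i + 1)).length + (f (i + 2)).length = d) : st k f ∈ V3 k i d :=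
  Finsupp.single_mem_supported k 1 hd

lemma Z3_single {i : ℕ} {f : ℕ → List Bool} (hd : f i = []) : st k f ∈ Z3 k i :=
  Finsupp.single_mem_supported k 1 hd

/-- A linear condition on a space of supported functions may be tested on basis states. -/
lemma supp_induct {s : Set (ℕ → List Bool)} {N : Submodule k (PO k)}
    (H : ∀ f ∈ s, st k f ∈ N) {x : PO k} (hx : x ∈ Finsupp.supported k k s) : x ∈ N := by
  rw [Finsupp.supported_eq_span_single] at hx
  refine (Submodule.span_le.2 ?_) hx
  rintro _ ⟨f, hf, rfl⟩
  exact H f hf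

lemma emb_mem {s : Set (ℕ → List Bool)} {i d : ℕ} {f : ℕ → List Bool}
    (H : ∀ p q : List Bool, p.length + q.length = d → put i f (p, q) ∈ s) {x : P2 k}
    (hx : x ∈ V2 k d) : emb k i f x ∈ Finsupp.supported k k s := by
  refine V2_induct (N := (Finsupp.supported k k s).comap (emb k i f)) (fun p q hpq => ?_) hx
  rw [Submodule.mem_comap, emb_single]
  exact Finsupp.single_mem_supported k 1 (H p q hpq)

lemma Dop_mem {i d : ℕ} {x : PO k} (a : Bool) (hx : x ∈ V3 k i d) :
    Dop k i a x ∈ V3 k i (d + 1) := by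
  refine supp_induct (N := (V3 k i (d + 1)).comap (Dop k i a)) (fun f hf => ?_) hx
  rw [Submodule.mem_comap, Dop_single]
  refine V3_single ?_
  simp at hf ⊢
  omega

variable (t h : k)

lemma S1_mem {i d : ℕ} {x : PO k} (b : Bool) (hx : x ∈ V3 k i d) :
    Sop t h i b x ∈ V3 k i d := by
  refine supp_induct (N := (V3 k i d).comap (Sop t h i b)) (fun f hf => ?_) hx
  rw [Submodule.mem_comap, Sop, loc_single]
  refine emb_mem (d := (f i).length + (f (i + 1)).length) (fun p q hpq => ?_)
    (SS_mem t h b (V2_single rfl))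
  simp only [Set.mem_ofPred_eq] at hf ⊢
  rw [put_left, put_right, put_ne _ _ (by omega) (by omega)]
  simp only
  omega

lemma S2_mem {i d : ℕ} {x : PO k} (b : Bool) (hx : x ∈ V3 k i d) :
    Sop t h (i + 1) b x ∈ V3 k i d := by
  refine supp_induct (N := (V3 k i d).comap (Sop t h (i + 1) b)) (fun f hf => ?_) hx
  rw [Submodule.mem_comap, Sop, loc_single]
  refine emb_mem (d := (f (i + 1)).length + (f (i + 2)).length) (fun p q hpq => ?_)
    (SS_mem t h b (V2_single rfl))
  simp only [Set.mem_ofPred_eq] at hf ⊢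
  rw [put_left, put_right, put_ne _ _ (by omega) (by omega)]
  simp only
  omega

lemma S2_memZ {i : ℕ} {x : PO k} (b : Bool) (hx : x ∈ Z3 k i) :
    Sop t h (i + 1) b x ∈ Z3 k i := by
  refine supp_induct (N := (Z3 k i).comap (Sop t h (i + 1) b)) (fun f hf => ?_) hx
  rw [Submodule.mem_comap, Sop, loc_single]
  refine emb_mem (d := (f (i + 1)).length + (f (i + 2)).length) (fun p q hpq => ?_)
    (SS_mem t h b (V2_single rfl))
  simp only [Set.mem_ofPred_eq] at hf ⊢
  rw [put_ne _ _ (by omega) (by omega), hf]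

lemma A2_mem {i d : ℕ} {x : PO k} (b : Bool) (hx : x ∈ V3 k i d) :
    A2 t h i b x ∈ V3 k i (d + 1) := by
  refine supp_induct (N := (V3 k i (d + 1)).comap (A2 t h i b)) (fun f hf => ?_) hx
  rw [Submodule.mem_comap, A2, loc_single]
  refine emb_mem (d := (f i).length + (f (i + 1)).length + 1) (fun p q hpq => ?_)
    (LL_mem t h b (V2_single rfl))
  simp only [Set.mem_ofPred_eq] at hf ⊢
  rw [put_left, put_right, put_ne _ _ (by omega) (by omega)]
  simp only
  omega

lemma A3_mem {i d : ℕ} {x : PO k} (b : Bool) (hx : x ∈ V3 k i d) :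
    A3 t h i b x ∈ V3 k i (d + 1) :=
  S2_mem t h b (A2_mem t h b (S2_mem t h b hx))

lemma Sop_not (i : ℕ) (b : Bool) (x : PO k) :
    Sop t h i (!b) x = Sop t h i b x - (cb h (!b) - cb h b) • x := by
  have : SS t h (!b) = SS t h b - (cb h (!b) - cb h b) • (1 : Module.End k (P2 k)) :=
    LinearMap.ext fun y => SS_not t h b y
  have e : loc i (SS t h (!b)) = loc i (SS t h b) - (cb h (!b) - cb h b) • 1 := by
    rw [this]
    exact (map_sub (loc (k := k) i) (SS t h b : Module.End k (P2 k)) _).trans (by rw [map_smul, map_one])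
  rw [Sop, Sop, e]
  rfl

lemma S2_A1 (i : ℕ) (a b : Bool) (x : PO k) :
    Sop t h (i + 1) b (Dop k i a x) = Dop k i a (Sop t h (i + 1) b x) :=
  LinearMap.congr_fun (loc_Dop (by omega) (by omega) _ _) x

/-- `A2` prepends at site `i + 1` when the word at site `i` is empty. -/
lemma A2_Z {i : ℕ} {x : PO k} (a : Bool) (hx : x ∈ Z3 k i) :
    A2 t h i a x = Dop k (i + 1) a x := by
  refine supp_induct (N := LinearMap.eqLocus (A2 t h i a) (Dop k (i + 1) a)) (fun f hf => ?_) hx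
  rw [LinearMap.mem_eqLocus, A2, loc_single, hf, LL_nil, emb_single, Dop_single]
  congr 1
  rw [put, show ([] : List Bool) = f i from hf.symm, Function.update_eq_self]

lemma A2_memZ {i : ℕ} {x : PO k} (a : Bool) (hx : x ∈ Z3 k i) : A2 t h i a x ∈ Z3 k i := by
  rw [A2_Z t h a hx]
  refine supp_induct (N := (Z3 k i).comap (Dop k (i + 1) a)) (fun f hf => ?_) hx
  rw [Submodule.mem_comap, Dop_single]
  exact Z3_single (by simpa using hf)

/-- The operator `S_b` multiplies by `t - c_b` where both words are empty. -/
lemma S_nil {i : ℕ} (b : Bool) {f : ℕ → List Bool} (h1 : f i = []) (h2 : f (i + 1) = []) :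
    Sop t h i b (st k f) = (t - cb h b) • st k f := by
  rw [Sop, loc_single, h1, h2, SS_apply, TT_nil, ← sub_smul, map_smul, emb_single, ← h1]
  congr 2
  rw [h1]
  funext j
  simp only [put, Function.update_apply]
  split_ifs <;> simp_all

section Rel

variable {t h} (ht : t * (t - h) = 1)
include ht

lemma Sop_inv (i : ℕ) (b : Bool) (x : PO k) : Sop t h i (!b) (Sop t h i b x) = x := by
  rw [← Module.End.mul_apply, Sop, Sop, ← map_mul, SS_inv ht, map_one, Module.End.one_apply]

lemma Sop_inv' (i : ℕ) (b : Bool) (x : PO k) : Sop t h i b (Sop t h i (!b) x) = x := by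
  simpa using Sop_inv ht i (!b) x

omit ht in
lemma S1_A1 (i : ℕ) (b : Bool) (x : PO k) :
    Sop t h i b (Dop k i b x) = A2 t h i b (Sop t h i (!b) x) := by
  rw [← Module.End.mul_apply, ← Module.End.mul_apply, Sop, Sop, A2, ← loc_pre1, ← map_mul,
    ← map_mul]
  congr 2
  exact LinearMap.ext fun y => SS_pre1 t h b y

lemma S1_A2 (i : ℕ) (b : Bool) (x : PO k) :
    Sop t h i (!b) (A2 t h i b x) = Dop k i b (Sop t h i b x) := by
  have := S1_A1 (t := t) (h := h) i b (Sop t h i b x)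
  rw [Sop_inv ht] at this
  rw [← this, Sop_inv ht]

lemma S2_A2 (i : ℕ) (b : Bool) (x : PO k) :
    Sop t h (i + 1) b (A2 t h i b x) = A3 t h i b (Sop t h (i + 1) (!b) x) := by
  rw [A3, Module.End.mul_apply, Module.End.mul_apply, Sop_inv' ht]

lemma S2_A3 (i : ℕ) (b : Bool) (x : PO k) :
    Sop t h (i + 1) (!b) (A3 t h i b x) = A2 t h i b (Sop t h (i + 1) b x) := by
  rw [A3, Module.End.mul_apply, Module.End.mul_apply, Sop_inv ht]

omit ht in
lemma A2_A1_same (i : ℕ) (a : Bool) (x : PO k) :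
    A2 t h i a (Dop k i a x) = Dop k i a (A2 t h i a x) := by
  rw [← Module.End.mul_apply, ← Module.End.mul_apply, A2, ← loc_pre1, ← map_mul, ← map_mul]
  congr 2
  exact LinearMap.ext fun y => LL_pre1_same a y

lemma A2_A1_ne (i : ℕ) (b : Bool) (x : PO k) :
    A2 t h i (!b) (Dop k i b x) =
      Dop k i b (Sop t h i b (Sop t h i b (A2 t h i (!b) x))) := by
  simp only [← Module.End.mul_apply, A2, Sop, ← loc_pre1, ← map_mul, ← mul_assoc]
  rw [LL_cross ht]

omit ht in
lemma A3_A1_same (i : ℕ) (a : Bool) (x : PO k) :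
    A3 t h i a (Dop k i a x) = Dop k i a (A3 t h i a x) := by
  simp only [A3, Module.End.mul_apply, S2_A1, A2_A1_same]

lemma A3_A1_ne (i : ℕ) (b : Bool) (x : PO k) :
    A3 t h i (!b) (Dop k i b x) =
      Dop k i b (Sop t h (i + 1) (!b) (Sop t h i b (Sop t h i b
        (Sop t h (i + 1) b (A3 t h i (!b) x))))) := by
  simp only [A3, Module.End.mul_apply, S2_A1, A2_A1_ne ht, Sop_inv' ht]

/-- `A3` is a two-site operator at `i + 1` when the word at site `i` is empty. -/
lemma A3_Z {i : ℕ} {x : PO k} (a : Bool) (hx : x ∈ Z3 k i) :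
    A3 t h i a x = A2 t h (i + 1) a x := by
  rw [A3, Module.End.mul_apply, Module.End.mul_apply, A2_Z t h a (S2_memZ t h a hx), A2, LL_eq ht,
    map_mul, map_mul, loc_pre1]
  rfl

/-- The braid relation for `S_b` at the state `x`. -/
def BR (t h : k) (i : ℕ) (b : Bool) (x : PO k) : Prop :=
  Sop t h i b (Sop t h (i + 1) b (Sop t h i b x)) =
    Sop t h (i + 1) b (Sop t h i b (Sop t h (i + 1) b x))

/-- `A3` commutes with `S_b` at the first two sites, at the state `x`. -/
def CR (t h : k) (i : ℕ) (a b : Bool) (x : PO k) : Prop :=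
  Sop t h i b (A3 t h i a x) = A3 t h i a (Sop t h i b x)

/-- The exchange relations between `A3` and `A2` at the state `x`. -/
def DR (t h : k) (i : ℕ) (x : PO k) : Prop :=
  (∀ a, A3 t h i a (A2 t h i a x) = A2 t h i a (A3 t h i a x)) ∧
  ∀ b, A3 t h i (!b) (A2 t h i b x) =
    A2 t h i b (Sop t h (i + 1) b (Sop t h (i + 1) b (A3 t h i (!b) x)))

lemma Sop_sq (i : ℕ) (b : Bool) (x : PO k) :
    Sop t h i b (Sop t h i b x) = x + (cb h (!b) - cb h b) • Sop t h i b x := by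
  have := Sop_not t h i b (Sop t h i b x)
  rw [Sop_inv ht, eq_sub_iff_add_eq] at this
  exact this.symm

lemma BR_not {i : ℕ} {b : Bool} {x : PO k} (H : BR t h i b x) : BR t h i (!b) x := by
  unfold BR at *
  have e1 := Sop_sq ht i b x
  have e2 := Sop_sq ht (i + 1) b x
  simp only [Sop_not, map_sub, map_smul, H, e1, e2]
  module

lemma BR_all {i : ℕ} {b : Bool} {x : PO k} (H : BR t h i b x) (c : Bool) : BR t h i c x := by
  rcases (by decide : ∀ b c : Bool, c = b ∨ c = !b) b c with rfl | rfl
  · exact H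
  · exact BR_not ht H

omit ht in
lemma CR_all {i : ℕ} {a b : Bool} {x : PO k} (H : CR t h i a b x) (c : Bool) :
    CR t h i a c x := by
  rcases (by decide : ∀ b c : Bool, c = b ∨ c = !b) b c with rfl | rfl
  · exact H
  · unfold CR at *
    simp only [Sop_not, map_sub, map_smul, H]

section Mixed

/- Consequences of the braid relation on the homogeneous component of degree `d`. -/

variable {i d : ℕ} (hB : ∀ x ∈ V3 k i d, ∀ b, BR t h i b x) {x : PO k} (hx : x ∈ V3 k i d)
include hB hx

lemma M1 (b : Bool) : Sop t h (i + 1) (!b) (Sop t h i b (Sop t h (i + 1) b x)) =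
    Sop t h i b (Sop t h (i + 1) b (Sop t h i (!b) x)) := by
  have := hB _ (S1_mem t h (!b) hx) b
  unfold BR at this
  rw [Sop_inv' ht] at this
  rw [this, Sop_inv ht]

lemma M3 (b : Bool) : Sop t h i (!b) (Sop t h (i + 1) b (Sop t h i b x)) =
    Sop t h (i + 1) b (Sop t h i b (Sop t h (i + 1) (!b) x)) := by
  have := hB _ (S2_mem t h (!b) hx) b
  unfold BR at this
  rw [Sop_inv' ht] at this
  rw [← this, Sop_inv ht]

lemma M2 (b : Bool) : Sop t h (i + 1) (!b) (Sop t h i (!b) (Sop t h (i + 1) b x)) =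
    Sop t h i b (Sop t h (i + 1) (!b) (Sop t h i (!b) x)) := by
  have := M3 ht hB (S1_mem t h (!b) hx) b
  rw [Sop_inv' ht] at this
  rw [this, Sop_inv ht]

lemma M4 (b : Bool) :
    Sop t h (i + 1) (!b) (Sop t h i b (Sop t h i b (Sop t h (i + 1) b x))) =
    Sop t h i b (Sop t h (i + 1) b (Sop t h (i + 1) b (Sop t h i (!b) x))) := by
  have h1 := M1 ht hB (S2_mem t h (!b) (S1_mem t h b (S2_mem t h b hx))) b
  rw [Sop_inv' ht] at h1
  rw [h1, M1 ht hB hx, Sop_inv ht]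

lemma M5 (b : Bool) :
    Sop t h i (!b) (Sop t h (i + 1) b (Sop t h (i + 1) b (Sop t h i b
      (Sop t h (i + 1) b (Sop t h (i + 1) b x))))) =
    Sop t h (i + 1) b (Sop t h i b (Sop t h i b (Sop t h (i + 1) b x))) := by
  have m := S2_mem t h b hx
  have h1 := hB _ m b
  have h2 := hB _ (S1_mem t h b m) b
  unfold BR at h1 h2
  rw [← h1, ← h2, Sop_inv ht]

end Mixed

omit ht in
/-- Every basis state of degree `d` is obtained by prepending a letter to one of degree `d - 1`,
unless its first two words are empty. -/
lemma st_cases {i d : ℕ} {f : ℕ → List Bool}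
    (hf : (f i).length + (f (i + 1)).length + (f (i + 2)).length = d) :
    (∃ e b, ∃ v ∈ V3 k i e, e + 1 = d ∧ st k f = Dop k i b v) ∨
    (∃ e b, ∃ v ∈ V3 k i e, v ∈ Z3 k i ∧ e + 1 = d ∧ st k f = A2 t h i b v ∧ st k f ∈ Z3 k i) ∨
    (f i = [] ∧ f (i + 1) = []) := by
  rcases h1 : f i with _ | ⟨b, p⟩
  · rcases h2 : f (i + 1) with _ | ⟨b, p⟩
    · exact Or.inr (Or.inr ⟨rfl, rfl⟩)
    · refine Or.inr (Or.inl ⟨d - 1, b, st k (Function.update f (i + 1) p), V3_single ?_, Z3_single ?_,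
        ?_, ?_, Z3_single h1⟩)
      · simp [h1, h2] at hf ⊢; omega
      · simpa using h1
      · simp [h1, h2] at hf; omega
      · rw [A2_Z t h b (Z3_single (by simpa using h1)), Dop_single]
        simp [← h2]
  · refine Or.inl ⟨d - 1, b, st k (Function.update f i p), V3_single ?_, ?_, ?_⟩
    · simp [h1] at hf ⊢; omega
    · simp [h1] at hf; omega
    · rw [Dop_single]
      simp [← h1]

lemma A3_nil {i : ℕ} (a : Bool) {f : ℕ → List Bool} (h1 : f i = []) (h2 : f (i + 1) = []) :
    A3 t h i a (st k f) = st k (Function.update f (i + 2) (a :: f (i + 2))) := by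
  rw [A3_Z ht a (Z3_single h1), A2_Z t h a (Z3_single h2), Dop_single]

/-- `A3` commutes with `S_b` in degree `d`, given the braid relation in degree `d` and the
commutation and exchange relations in degree `d - 1`. -/
lemma C_step {i d : ℕ} (hB : ∀ x ∈ V3 k i d, ∀ b, BR t h i b x)
    (ih : ∀ e, e + 1 = d → ∀ x ∈ V3 k i e, (∀ a b, CR t h i a b x) ∧ DR t h i x) :
    ∀ x ∈ V3 k i d, ∀ a b, CR t h i a b x := by
  intro x hx a c
  refine supp_induct (N := LinearMap.eqLocus (Sop t h i c * A3 t h i a)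
    (A3 t h i a * Sop t h i c)) (fun f hf => ?_) hx
  change CR t h i a c (st k f)
  rcases st_cases (t := t) (h := h) hf with ⟨e, b, v, hv, rfl, hfv⟩ |
    ⟨e, b, v, hv, -, rfl, hfv, -⟩ | ⟨h1, h2⟩
  · rw [hfv]
    refine CR_all (b := b) ?_ c
    have hm := A3_mem t h a hv
    obtain ⟨hC, hD⟩ := ih e rfl v hv
    obtain ⟨-, hD'⟩ := ih e rfl _ (S1_mem t h (!b) hv)
    have hC' := hC a (!b)
    unfold CR at hC' ⊢
    rcases (by decide : ∀ b c : Bool, c = b ∨ c = !b) b a with rfl | rfl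
    · rw [A3_A1_same, S1_A1, S1_A1, hC', hD'.1]
    · rw [A3_A1_ne ht, M4 ht hB hm, S1_A1, Sop_inv ht, S1_A1, hD'.2, hC']
  · rw [hfv]
    refine CR_all (b := !b) ?_ c
    have hm := A3_mem t h a hv
    obtain ⟨hC, hD⟩ := ih e rfl v hv
    have hC' := hC a b
    unfold CR at hC' ⊢
    rcases (by decide : ∀ b c : Bool, c = b ∨ c = !b) b a with rfl | rfl
    · rw [hD.1, S1_A2 ht, hC', S1_A2 ht, A3_A1_same]
    · rw [hD.2, S1_A2 ht, S1_A2 ht, A3_A1_ne ht, M4 ht hB (A3_mem t h _ (S1_mem t h b hv)), ← hC',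
        Sop_inv ht]
  · unfold CR
    rw [A3_nil ht a h1 h2, S_nil t h c h1 h2, map_smul, A3_nil ht a h1 h2, S_nil]
    · simpa using h1
    · simpa using h2

/-- The braid relation in degree `d + 1`, given the braid relation and the commutation of `A3`
with `S_b` in degree `d`. -/
lemma B_step {i d : ℕ} (hB : ∀ x ∈ V3 k i d, ∀ b, BR t h i b x)
    (hC : ∀ x ∈ V3 k i d, ∀ a b, CR t h i a b x) :
    ∀ x ∈ V3 k i (d + 1), ∀ b, BR t h i b x := by
  intro x hx c
  refine supp_induct (N := LinearMap.eqLocus (Sop t h i c * (Sop t h (i + 1) c * Sop t h i c))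
    (Sop t h (i + 1) c * (Sop t h i c * Sop t h (i + 1) c))) (fun f hf => ?_) hx
  change BR t h i c (st k f)
  have swap : ∀ (j : ℕ) (b : Bool) (y : PO k), Sop t h j b y =
      Sop t h j (!b) y + (cb h (!b) - cb h b) • y := by
    intro j b y
    rw [Sop_not]; abel
  rcases st_cases (t := t) (h := h) hf with ⟨e, b, v, hv, he, hfv⟩ |
    ⟨e, b, v, hv, -, he, hfv, -⟩ | ⟨h1, h2⟩
  · obtain rfl : e = d := by omega
    rw [hfv]
    refine BR_all ht (b := b) ?_ c
    unfold BR
    have hC' := hC _ (S2_mem t h (!b) (S1_mem t h (!b) hv)) b b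
    unfold CR at hC'
    rw [S1_A1, S2_A2 ht, hC', S2_A1, S1_A1, S2_A2 ht, M2 ht hB hv]
  · obtain rfl : e = d := by omega
    rw [hfv]
    refine BR_all ht (b := b) ?_ c
    unfold BR
    have hC' := hC _ (S2_mem t h (!b) hv) b b
    unfold CR at hC'
    rw [swap i b (A2 t h i b v), S1_A2 ht, map_add, map_smul, S2_A1, S2_A2 ht, map_add, map_smul,
      S1_A1, hC', swap (i + 1) b (A3 t h i b _), S2_A3 ht, M3 ht hB hv]
  · rcases h3 : f (i + 2) with _ | ⟨b, r⟩
    · unfold BR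
      simp only [S_nil t h c h1 h2, S_nil t h c h2 h3, map_smul]
    · have hf' : st k f = A3 t h i b (st k (Function.update f (i + 2) r)) := by
        rw [A3_nil ht b (by simpa using h1) (by simpa using h2)]
        simp [← h3]
      have hv : st k (Function.update f (i + 2) r) ∈ V3 k i d := by
        refine V3_single ?_
        simp [h1, h2, h3] at hf ⊢
        omega
      rw [hf']
      generalize st k (Function.update f (i + 2) r) = w at hv
      refine BR_all ht (b := b) ?_ c
      unfold BR
      have c1 := hC _ hv b b
      have c2 := hC _ (S1_mem t h b hv) b b
      have b1 := hB _ hv b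
      unfold CR at c1 c2
      unfold BR at b1
      have s3 : ∀ y, Sop t h (i + 1) b (A3 t h i b y) = A2 t h i b (Sop t h (i + 1) b y) +
          (cb h (!b) - cb h b) • A3 t h i b y := fun y => by
        rw [swap (i + 1) b (A3 t h i b y), S2_A3 ht]
      have s2 : ∀ y, Sop t h i b (A2 t h i b y) = Dop k i b (Sop t h i b y) +
          (cb h (!b) - cb h b) • A2 t h i b y := fun y => by
        rw [swap i b (A2 t h i b y), S1_A2 ht]
      simp only [c1, s3, map_add, map_smul, s2, c2, S2_A1, S2_A2 ht, Sop_inv ht, Sop_sq ht i b w, b1]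
      module

/-- The exchange relations in degree `d`, given those in degree `d - 1`, the commutation of `A3`
with `S_b` in degree `d` and the braid relation in degrees `d` and `d + 1`. -/
lemma D_step {i d : ℕ} (hC : ∀ x ∈ V3 k i d, ∀ a b, CR t h i a b x)
    (ih : ∀ e, e + 1 = d → ∀ x ∈ V3 k i e, DR t h i x)
    (hB : ∀ x ∈ V3 k i (d + 1), ∀ b, BR t h i b x)
    (hB' : ∀ x ∈ V3 k i d, ∀ b, BR t h i b x) :
    ∀ x ∈ V3 k i d, DR t h i x := by
  intro x hx
  suffices key : ∀ f ∈ {f : ℕ → List Bool |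
      (f i).length + (f (i + 1)).length + (f (i + 2)).length = d}, DR t h i (st k f) by
    constructor
    · intro a
      exact supp_induct (N := LinearMap.eqLocus (A3 t h i a * A2 t h i a)
        (A2 t h i a * A3 t h i a)) (fun f hf => (key f hf).1 a) hx
    · intro b
      exact supp_induct (N := LinearMap.eqLocus (A3 t h i (!b) * A2 t h i b)
        (A2 t h i b * (Sop t h (i + 1) b * (Sop t h (i + 1) b * A3 t h i (!b)))))
        (fun f hf => (key f hf).2 b) hx
  intro f hf
  have hZ : ∀ z ∈ Z3 k i, DR t h i z := by
    intro z hz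
    have m : ∀ a, A3 t h i a z ∈ Z3 k i := fun a =>
      S2_memZ t h a (A2_memZ t h a (S2_memZ t h a hz))
    constructor
    · intro a
      rw [A2_Z t h a hz, A2_Z t h a (m a), A3_Z ht a hz, A3_Z ht a, A2_A1_same]
      rw [← A2_Z t h a hz]
      exact A2_memZ t h a hz
    · intro b
      rw [A2_Z t h b hz, A2_Z t h b (S2_memZ t h b (S2_memZ t h b (m _))), A3_Z ht _ hz,
        A3_Z ht, A2_A1_ne ht]
      rw [← A2_Z t h b hz]
      exact A2_memZ t h b hz
  rcases st_cases (t := t) (h := h) hf with ⟨e, c, v, hv, rfl, hfv⟩ |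
    ⟨e, b, v, hv, -, he, hfv, hz⟩ | ⟨h1, h2⟩
  · rw [hfv]
    obtain ⟨d1, d2⟩ := ih e rfl v hv
    constructor
    · intro a
      rcases (by decide : ∀ b c : Bool, c = b ∨ c = !b) c a with rfl | rfl
      · rw [A2_A1_same, A3_A1_same, d1, A3_A1_same, A2_A1_same]
      · have m := A2_mem t h (!c) hv
        have m1 := S1_mem t h c m
        have c1 := hC _ m1 (!c) c
        have c2 := hC _ m (!c) c
        unfold CR at c1 c2
        have e1 := S1_A1 (t := t) (h := h) i (!c)
        have e2 := S1_A2 ht i (!c)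
        simp only [Bool.not_not] at e1 e2
        rw [A2_A1_ne ht, A3_A1_ne ht, ← c1, ← c2, d1,
          M4 ht hB (S1_mem t h c (S1_mem t h c (A2_mem t h _ (A3_mem t h _ hv)))), Sop_inv ht,
          A3_A1_ne ht, A2_A1_ne ht, M4 ht hB' (A3_mem t h _ hv), ← e1, Sop_inv' ht, ← S2_A1,
          ← S2_A1, ← e2]
    · intro b
      rcases (by decide : ∀ b c : Bool, c = b ∨ c = !b) c b with rfl | rfl
      · rw [A2_A1_same, A3_A1_ne ht, M4 ht hB (A3_mem t h _ (A2_mem t h _ hv)), d2, S1_A2 ht,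
          S2_A1, S2_A1, S1_A1, M5 ht hB' (A3_mem t h _ hv), A3_A1_ne ht, S2_A1, S2_A1,
          Sop_inv' ht, A2_A1_same]
      · have d3 := d2 (!c)
        have m := A2_mem t h (!c) hv
        have c1 := hC _ (S1_mem t h c m) c c
        have c2 := hC _ m c c
        unfold CR at c1 c2
        rw [Bool.not_not] at d3 ⊢
        rw [A2_A1_ne ht, A3_A1_same, ← c1, ← c2, d3, A3_A1_same, S2_A1, S2_A1, A2_A1_ne ht]
  · exact hZ _ hz
  · exact hZ _ (Z3_single h1)

/-- The braid, commutation and exchange relations at three sites hold in every degree; they are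
proved by one simultaneous induction. -/
lemma BCD (i d : ℕ) : (∀ x ∈ V3 k i d, (∀ a b, CR t h i a b x) ∧ DR t h i x) ∧
    (∀ x ∈ V3 k i d, ∀ b, BR t h i b x) ∧ (∀ x ∈ V3 k i (d + 1), ∀ b, BR t h i b x) := by
  have step : ∀ d, (∀ x ∈ V3 k i d, ∀ b, BR t h i b x) →
      (∀ e, e + 1 = d → ∀ x ∈ V3 k i e, (∀ a b, CR t h i a b x) ∧ DR t h i x) →
      (∀ x ∈ V3 k i d, (∀ a b, CR t h i a b x) ∧ DR t h i x) ∧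
      (∀ x ∈ V3 k i d, ∀ b, BR t h i b x) ∧ (∀ x ∈ V3 k i (d + 1), ∀ b, BR t h i b x) := by
    intro d hB ih
    have hC := C_step ht hB ih
    have hB' := B_step ht hB hC
    exact ⟨fun x hx => ⟨hC x hx, D_step ht hC (fun e he x hx => (ih e he x hx).2) hB' hB x hx⟩,
      hB, hB'⟩
  induction d with
  | zero =>
    refine step 0 ?_ (fun e he => by omega)
    intro x hx c
    refine supp_induct (N := LinearMap.eqLocus (Sop t h i c * (Sop t h (i + 1) c * Sop t h i c))
      (Sop t h (i + 1) c * (Sop t h i c * Sop t h (i + 1) c))) (fun f hf => ?_) hx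
    have h1 : f i = [] := List.length_eq_zero_iff.1 (by simp at hf; simp [hf])
    have h2 : f (i + 1) = [] := List.length_eq_zero_iff.1 (by simp at hf; simp [hf])
    have h3 : f (i + 2) = [] := List.length_eq_zero_iff.1 (by simp at hf; simp [hf])
    rw [LinearMap.mem_eqLocus]
    simp only [Module.End.mul_apply, S_nil t h c h1 h2, S_nil t h c h2 h3, map_smul]
  | succ d ih =>
    exact step (d + 1) ih.2.2 (fun e he => by obtain rfl : e = d := by omega
                                              exact ih.1)

/-- The operators `T_i` satisfy the braid relation. -/
lemma Top_braid (i : ℕ) :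
    loc (k := k) i (TT t h) * loc (i + 1) (TT t h) * loc i (TT t h) =
      loc (i + 1) (TT t h) * loc i (TT t h) * loc (i + 1) (TT t h) := by
  refine PO_ext fun f => ?_
  have := (BCD ht i _).2.1 (st k f) (V3_single rfl) false
  have e : SS t h false = TT t h := LinearMap.ext fun x => by simp [SS_apply, cb]
  simp only [BR, Sop, e] at this
  exact this

end Rel

end Braid
end SLD

namespace SLD

/-! ### The representation -/

section CommLemmas

/- Here `x (i + 1) = U i * x i * U i`, as for `X` (with `U = T⁻¹`) and `Y` (with `U = T`). -/

variable {A : Type*} [Ring A] {U x : ℕ → A}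
  (hU : ∀ i j, i + 1 < j → Commute (U i) (U j))
  (hbr : ∀ i, U i * U (i + 1) * U i = U (i + 1) * U i * U (i + 1))
  (hx : ∀ i, x (i + 1) = U i * x i * U i)
  (hx0 : ∀ i, Commute (U (i + 1)) (x 0))
include hU hbr hx hx0

omit hbr in
lemma comm_lt {i j : ℕ} (hij : j < i) : Commute (U i) (x j) := by
  induction j with
  | zero => obtain ⟨i, rfl⟩ : ∃ i', i = i' + 1 := ⟨i - 1, by omega⟩; exact hx0 i
  | succ j ih =>
    rw [hx]
    exact ((hU j i hij).symm.mul_right (ih (by omega))).mul_right (hU j i hij).symm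

lemma comm_gt {i j : ℕ} (hij : i + 1 < j) : Commute (U i) (x j) := by
  induction j, hij using Nat.le_induction with
  | base =>
    have h1 := (comm_lt hU hx hx0 (Nat.lt_succ_self i)).eq
    have h2 := hbr i
    rw [Nat.succ_eq_add_one] at *
    change U i * x (i + 1 + 1) = x (i + 1 + 1) * U i
    rw [hx (i + 1), hx i]
    calc U i * (U (i + 1) * (U i * x i * U i) * U (i + 1))
        = (U i * U (i + 1) * U i) * x i * U i * U (i + 1) := by simp only [mul_assoc]
      _ = U (i + 1) * U i * (U (i + 1) * x i) * U i * U (i + 1) := by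
        rw [h2]; simp only [mul_assoc]
      _ = U (i + 1) * U i * x i * (U (i + 1) * U i * U (i + 1)) := by
        rw [h1]; simp only [mul_assoc]
      _ = _ := by rw [← h2]; simp only [mul_assoc]
  | succ j hj ih =>
    rw [hx]
    exact ((hU i j hj).mul_right ih).mul_right (hU i j hj)

lemma comm_xx (h01 : Commute (x 0) (x 1)) (i j : ℕ) : Commute (x i) (x j) := by
  have key : ∀ i j, i < j → Commute (x i) (x j) := by
    intro i
    induction i with
    | zero =>
      intro j hj
      induction j, hj using Nat.le_induction with
      | base => exact h01
      | succ j hj ih =>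
        have := (comm_lt hU hx hx0 (Nat.lt_of_lt_of_le Nat.zero_lt_one hj)).symm
        rw [hx]
        exact (this.mul_right ih).mul_right this
    | succ i ih =>
      intro j hj
      rw [hx]
      have := comm_gt hU hbr hx hx0 hj
      exact (this.mul_left (ih j (by omega))).mul_left this
  rcases lt_trichotomy i j with h | rfl | h
  · exact key i j h
  · exact Commute.refl _
  · exact (key j i h).symm

end CommLemmas

section Rep

variable {k : Type*} [CommRing k]

/-- The operators representing `X_n` (for `b = true`) and `Y_n` (for `b = false`). -/
def Lop (t h : k) (b : Bool) : ℕ → Module.End k (PO k)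
  | 0 => Dop k 0 b
  | n + 1 => Sop t h n b * Lop t h b n * Sop t h n b

/-- The operators representing the generators. -/
def rep (t h : k) : HGen → Module.End k (PO k)
  | HGen.T i => Sop t h i false
  | HGen.T' i => Sop t h i true
  | HGen.X n => Lop t h true n
  | HGen.Y n => Lop t h false n

variable {t h : k} (ht : t * (t - h) = 1)

lemma Sop_comm {i j : ℕ} (hij : i + 1 < j) (a b : Bool) : Commute (Sop t h i a) (Sop t h j b) :=
  loc_comm hij _ _

lemma Sop_diff (i : ℕ) : Sop t h i false - Sop t h i true = h • 1 := by
  refine LinearMap.ext fun x => ?_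
  have := Sop_not t h i false x
  rw [LinearMap.sub_apply, ← Bool.not_false, this]
  simp [cb]

lemma Sop_Lop_zero (i : ℕ) (a b : Bool) : Commute (Sop t h (i + 1) a) (Lop t h b 0) :=
  loc_Dop (by omega) (by omega) _ _

include ht

lemma Sop_braid (i : ℕ) (b : Bool) : Sop t h i b * Sop t h (i + 1) b * Sop t h i b =
    Sop t h (i + 1) b * Sop t h i b * Sop t h (i + 1) b :=
  PO_ext fun f => (BCD ht i _).2.1 (st k f) (V3_single rfl) b

lemma Lop_one (b : Bool) : Lop t h b 1 = A2 t h 0 b := by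
  rw [Lop, Lop, A2, LL_eq ht, map_mul, map_mul, loc_pre1]
  rfl

lemma Lop_comm (b : Bool) (i j : ℕ) : Commute (Lop t h b i) (Lop t h b j) := by
  refine comm_xx (U := fun i => Sop t h i b) (fun i j hij => Sop_comm hij b b)
    (fun i => Sop_braid ht i b) (fun i => rfl) (fun i => Sop_Lop_zero i b b) ?_ i j
  rw [Lop_one ht]
  exact LinearMap.ext fun x => (A2_A1_same 0 b x).symm

lemma Sop_Lop (a b : Bool) {i j : ℕ} (h1 : j ≠ i) (h2 : j ≠ i + 1) :
    Commute (Sop t h i a) (Lop t h b j) := by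
  have hb : Commute (Sop t h i b) (Lop t h b j) := by
    rcases lt_or_gt_of_ne h1 with hj | hj
    · exact comm_lt (U := fun i => Sop t h i b) (x := Lop t h b) (fun i j hij => Sop_comm hij b b)
        (fun i => rfl) (fun i => Sop_Lop_zero i b b) hj
    · exact comm_gt (U := fun i => Sop t h i b) (x := Lop t h b) (fun i j hij => Sop_comm hij b b)
        (fun i => Sop_braid ht i b) (fun i => rfl) (fun i => Sop_Lop_zero i b b) (by omega)
  have hd : ∀ c : k, Commute (c • (1 : Module.End k (PO k))) (Lop t h b j) :=
    fun c => (Commute.one_left _).smul_left c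
  have e1 : Sop t h i false = Sop t h i true + h • (1 : Module.End k (PO k)) :=
    LinearMap.ext fun x => by
      have := LinearMap.congr_fun (Sop_diff (t := t) (h := h) i) x
      rw [LinearMap.sub_apply] at this
      rw [LinearMap.add_apply, ← this]
      abel
  have e2 : Sop t h i true = Sop t h i false + (-h) • (1 : Module.End k (PO k)) :=
    LinearMap.ext fun x => by
      rw [e1]
      simp only [LinearMap.add_apply, LinearMap.smul_apply, neg_smul]
      abel
  cases a <;> cases b
  · exact hb
  · rw [e1]
    exact Commute.add_left (R := Module.End k (PO k)) hb (hd h)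
  · rw [e2]
    exact Commute.add_left (R := Module.End k (PO k)) hb (hd (-h))
  · exact hb

lemma cross_rel : Lop t h false 0 * Sop t h 0 false * Lop t h true 0 =
    Lop t h true 1 * Lop t h false 0 * Sop t h 0 false := by
  rw [Lop_one ht]
  refine LinearMap.ext fun x => ?_
  have e1 := A2_A1_ne ht 0 false (Sop t h 0 false x)
  have e2 := S1_A2 ht 0 true (Sop t h 0 false x)
  have e3 := Sop_inv ht 0 false x
  simp only [Bool.not_false, Bool.not_true] at e1 e2 e3
  rw [e2, e3] at e1
  exact e1.symm

/-- The representation of `H⁺` on the state space. -/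
def repHom [Algebra Kfield k] (hh : algebraMap Kfield k hvar = h) :
    Hplus →ₐ[Kfield] Module.End k (PO k) :=
  RingQuot.liftAlgHom Kfield ⟨FreeAlgebra.lift Kfield (rep t h), by
    intro x y hxy
    induction hxy with
    | TT' i =>
      simp only [map_mul, FreeAlgebra.lift_ι_apply, rep, map_one]
      exact LinearMap.ext fun x => Sop_inv ht i true x
    | T'T i =>
      simp only [map_mul, FreeAlgebra.lift_ι_apply, rep, map_one]
      exact LinearMap.ext fun x => Sop_inv ht i false x
    | TminusT' i =>
      simp only [map_sub, FreeAlgebra.lift_ι_apply, rep, AlgHom.commutes, Sop_diff]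
      rw [Algebra.algebraMap_eq_smul_one, ← hh, algebraMap_smul]
    | Tcomm i j hij =>
      simp only [map_mul, FreeAlgebra.lift_ι_apply, rep]
      rcases hij with hij | hij
      · exact Sop_comm hij false false
      · exact (Sop_comm hij false false).symm
    | braid i =>
      simp only [map_mul, FreeAlgebra.lift_ι_apply, rep]
      exact Sop_braid ht i false
    | TXT i => simp only [map_mul, FreeAlgebra.lift_ι_apply, rep, Lop]
    | TX i j h1 h2 =>
      simp only [map_mul, FreeAlgebra.lift_ι_apply, rep]
      exact Sop_Lop ht false true h1 h2
    | XX i j =>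
      simp only [map_mul, FreeAlgebra.lift_ι_apply, rep]
      exact Lop_comm ht true i j
    | TYT i => simp only [map_mul, FreeAlgebra.lift_ι_apply, rep, Lop]
    | TY i j h1 h2 =>
      simp only [map_mul, FreeAlgebra.lift_ι_apply, rep]
      exact Sop_Lop ht false false h1 h2
    | YY i j =>
      simp only [map_mul, FreeAlgebra.lift_ι_apply, rep]
      exact Lop_comm ht false i j
    | cross =>
      simp only [map_mul, FreeAlgebra.lift_ι_apply, rep]
      exact cross_rel ht⟩

lemma repHom_gen [Algebra Kfield k] (hh : algebraMap Kfield k hvar = h) (g : HGen) :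
    repHom ht hh (gen g) = rep t h g := by
  rw [repHom, gen, RingQuot.liftAlgHom_mkAlgHom_apply, FreeAlgebra.lift_ι_apply]

end Rep

end SLD

namespace SLD

/-! ### Change of base ring -/

section BaseChange

variable {k k' : Type*} [CommRing k] [CommRing k'] [Algebra k k']

/-- Extension of scalars on free modules. -/
def bc (k' : Type*) [CommRing k'] [Algebra k k'] {α : Type*} : (α →₀ k) →ₗ[k] (α →₀ k') :=
  Finsupp.mapRange.linearMap (Algebra.linearMap k k')

lemma bc_apply {α : Type*} (x : α →₀ k) (a : α) : bc k' x a = algebraMap k k' (x a) := by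
  simp [bc]

lemma bc_single {α : Type*} (a : α) :
    bc k' (Finsupp.single a (1 : k)) = Finsupp.single a 1 := by
  simp [bc]

lemma bc_smul {α : Type*} (c : k) (x : α →₀ k) :
    bc k' (c • x) = algebraMap k k' c • bc k' x := by
  rw [map_smul, algebraMap_smul]

lemma bc_lmapDomain {α β : Type*} (g : α → β) (x : α →₀ k) :
    bc k' (Finsupp.lmapDomain k k g x) = Finsupp.lmapDomain k' k' g (bc k' x) := by
  induction x using Finsupp.induction_linear with
  | zero => simp
  | add x y hx hy => simp only [map_add, hx, hy]
  | single a c => simp [bc, Finsupp.mapDomain_single]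

lemma bc_cb (h : k) (b : Bool) : algebraMap k k' (cb h b) = cb (algebraMap k k' h) b := by
  cases b <;> simp [cb]

variable (t h : k)

/-- The two-site operators are compatible with extension of scalars. -/
lemma bc_two_site (d : ℕ) :
    (∀ x ∈ V2 k d, bc k' (TT t h x) = TT (algebraMap k k' t) (algebraMap k k' h) (bc k' x)) ∧
    (∀ x ∈ V2 k d, ∀ a,
      bc k' (LL t h a x) = LL (algebraMap k k' t) (algebraMap k k' h) a (bc k' x)) := by
  set t' := algebraMap k k' t with ht'
  set h' := algebraMap k k' h with hh'
  have redT : (∀ p q : List Bool, p.length + q.length = d →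
      bc k' (TT t h (s2 k p q)) = TT t' h' (bc k' (s2 k p q))) →
      ∀ x ∈ V2 k d, bc k' (TT t h x) = TT t' h' (bc k' x) := fun H x hx =>
    V2_induct (N := LinearMap.eqLocus (bc k' ∘ₗ TT t h) ((TT t' h').restrictScalars k ∘ₗ bc k'))
      H hx
  have redL : (∀ p q : List Bool, p.length + q.length = d → ∀ a,
      bc k' (LL t h a (s2 k p q)) = LL t' h' a (bc k' (s2 k p q))) →
      ∀ x ∈ V2 k d, ∀ a, bc k' (LL t h a x) = LL t' h' a (bc k' x) := fun H x hx a =>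
    V2_induct (N := LinearMap.eqLocus (bc k' ∘ₗ LL t h a)
      ((LL t' h' a).restrictScalars k ∘ₗ bc k')) (fun p q hpq => H p q hpq a) hx
  induction d with
  | zero =>
    refine ⟨redT fun p q hpq => ?_, redL fun p q hpq a => ?_⟩
    · have hp : p = [] := List.length_eq_zero_iff.1 (by omega)
      have hq : q = [] := List.length_eq_zero_iff.1 (by omega)
      subst hp hq
      rw [TT_nil, bc_smul, bc_single, TT_nil]
    · have hp : p = [] := List.length_eq_zero_iff.1 (by omega)
      subst hp
      rw [LL_nil, bc_single, bc_single, LL_nil]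
  | succ d ih =>
    obtain ⟨ihT, ihL⟩ := ih
      (fun H x hx => V2_induct
        (N := LinearMap.eqLocus (bc k' ∘ₗ TT t h) ((TT t' h').restrictScalars k ∘ₗ bc k')) H hx)
      (fun H x hx a => V2_induct (N := LinearMap.eqLocus (bc k' ∘ₗ LL t h a)
        ((LL t' h' a).restrictScalars k ∘ₗ bc k')) (fun p q hpq => H p q hpq a) hx)
    have ihS : ∀ x ∈ V2 k d, ∀ b, bc k' (SS t h b x) = SS t' h' b (bc k' x) := by
      intro x hx b
      rw [SS_apply, map_sub, ihT x hx, bc_smul, bc_cb, SS_apply]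
    refine ⟨redT fun p q hpq => ?_, redL fun p q hpq a => ?_⟩
    · match p, q, hpq with
      | [], b :: q, hpq =>
        have h1 : s2 k [] q ∈ V2 k d := V2_single (by simpa using hpq)
        have e := SS_nil t h b q
        have e' := SS_nil t' h' b q
        rw [SS_apply, sub_eq_iff_eq_add] at e e'
        rw [e, bc_single, e', map_add, bc_smul, bc_cb, pre1, bc_lmapDomain, ihS _ h1, bc_single,
          bc_single, pre1]
      | b :: p, q, hpq =>
        have h1 : s2 k p q ∈ V2 k d := V2_single (by simp at hpq; omega)
        have e := SS_pre1 t h b (s2 k p q)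
        have e' := SS_pre1 t' h' b (s2 k' p q)
        rw [SS_apply, sub_eq_iff_eq_add, pre1_single] at e e'
        rw [e, bc_single, e', map_add, bc_smul, bc_cb, ihL _ (SS_mem t h _ h1), ihS _ h1, bc_single,
          bc_single]
    · match p, q, hpq with
      | [], q, hpq => rw [LL_nil, bc_single, bc_single, LL_nil]
      | b :: p, q, hpq =>
        have h1 : s2 k p q ∈ V2 k d := V2_single (by simp at hpq; omega)
        have e := LL_pre1 t h a b (s2 k p q)
        have e' := LL_pre1 t' h' a b (s2 k' p q)
        rw [pre1_single] at e e'
        rw [e, bc_single, e', map_add]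
        congr 1
        · rw [pre1, bc_lmapDomain, ihL _ h1, bc_single, pre1]
        · split_ifs
          · simp
          · rw [bc_smul, map_sub, bc_cb, bc_cb, pre1, bc_lmapDomain, pre1, bc_lmapDomain,
              ihS _ h1, bc_single, pre1, pre1]

lemma bc_SS (b : Bool) (x : P2 k) :
    bc k' (SS t h b x) = SS (algebraMap k k' t) (algebraMap k k' h) b (bc k' x) := by
  suffices bc k' ∘ₗ SS t h b =
      (SS (algebraMap k k' t) (algebraMap k k' h) b).restrictScalars k ∘ₗ bc k' from
    LinearMap.congr_fun this x
  apply Finsupp.lhom_ext'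
  rintro ⟨p, q⟩
  apply LinearMap.ext_ring
  change bc k' (SS t h b (s2 k p q)) = SS _ _ b (bc k' (s2 k p q))
  rw [SS_apply, map_sub, (bc_two_site t h _).1 _ (V2_single rfl), bc_smul, bc_cb, SS_apply]

lemma bc_Sop (i : ℕ) (b : Bool) (x : PO k) :
    bc k' (Sop t h i b x) = Sop (algebraMap k k' t) (algebraMap k k' h) i b (bc k' x) := by
  suffices bc k' ∘ₗ Sop t h i b =
      (Sop (algebraMap k k' t) (algebraMap k k' h) i b).restrictScalars k ∘ₗ bc k' from
    LinearMap.congr_fun this x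
  apply Finsupp.lhom_ext'
  intro f
  apply LinearMap.ext_ring
  change bc k' (Sop t h i b (st k f)) = Sop _ _ i b (bc k' (st k f))
  rw [bc_single, Sop, Sop, loc_single, loc_single, emb, bc_lmapDomain, bc_SS, bc_single, emb]

lemma bc_Lop (b : Bool) (n : ℕ) (x : PO k) :
    bc k' (Lop t h b n x) = Lop (algebraMap k k' t) (algebraMap k k' h) b n (bc k' x) := by
  induction n generalizing x with
  | zero => rw [Lop, Lop, Dop, bc_lmapDomain, Dop]
  | succ n ih =>
    simp only [Lop, Module.End.mul_apply, bc_Sop, ih]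

lemma bc_rep (g : HGen) (x : PO k) :
    bc k' (rep t h g x) = rep (algebraMap k k' t) (algebraMap k k' h) g (bc k' x) := by
  cases g <;> simp only [rep, bc_Sop, bc_Lop]

lemma bc_list (l : List HGen) (x : PO k) :
    bc k' ((l.map (rep t h)).prod x) =
      (l.map (rep (algebraMap k k' t) (algebraMap k k' h))).prod (bc k' x) := by
  induction l with
  | nil => rfl
  | cons g l ih => simp only [List.map_cons, List.prod_cons, Module.End.mul_apply, bc_rep, ih]

end BaseChange

/-! ### Specialisation at `t = 1` -/

section Special

variable {k : Type*} [CommRing k]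

lemma cb_zero (b : Bool) : cb (0 : k) b = 0 := by cases b <;> simp [cb]

lemma SS_zero (b c : Bool) : SS (1 : k) 0 b = SS 1 0 c := by
  rw [SS, SS, cb_zero, cb_zero]

/-- At `t = 1`, `h = 0` the operator `T` exchanges the two words, and the second-site letter is
prepended to the second word. -/
lemma two_site_special (d : ℕ) (p q : List Bool) (hd : p.length + q.length = d) :
    SS (1 : k) 0 false (s2 k p q) = s2 k q p ∧
      ∀ a, LL (1 : k) 0 a (s2 k p q) = s2 k p (a :: q) := by
  induction d generalizing p q with
  | zero =>
    have hp : p = [] := List.length_eq_zero_iff.1 (by omega)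
    have hq : q = [] := List.length_eq_zero_iff.1 (by omega)
    subst hp hq
    exact ⟨by rw [SS_apply, cb_zero, TT_nil, zero_smul, sub_zero, one_smul],
      fun a => LL_nil 1 0 a []⟩
  | succ d ih =>
    match p, q, hd with
    | [], b :: q, hd =>
      refine ⟨?_, fun a => LL_nil _ _ _ _⟩
      rw [SS_zero false (!b), SS_nil, SS_zero b false, (ih [] q (by simpa using hd)).1, pre1_single]
    | b :: p, q, hd =>
      have h1 : p.length + q.length = d := by simp at hd; omega
      refine ⟨?_, fun a => ?_⟩
      · rw [← pre1_single, SS_zero false b, SS_pre1, SS_zero (!b) false, (ih p q h1).1,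
          (ih q p (by omega)).2]
      · rw [← pre1_single, LL_pre1, (ih p q h1).2, cb_zero, cb_zero, pre1_single]
        simp

/-- The action of the generators on basis states at `t = 1`. -/
def act : HGen → (ℕ → List Bool) → ℕ → List Bool
  | HGen.T i => fun f => f ∘ swapAdj i
  | HGen.T' i => fun f => f ∘ swapAdj i
  | HGen.X n => fun f => Function.update f n (true :: f n)
  | HGen.Y n => fun f => Function.update f n (false :: f n)

lemma Sop_special (i : ℕ) (b : Bool) (f : ℕ → List Bool) :
    Sop (1 : k) 0 i b (st k f) = st k (f ∘ swapAdj i) := by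
  rw [Sop, loc_single, SS_zero b false, (two_site_special _ _ _ rfl).1, emb_single]
  congr 1
  funext j
  simp only [put, Function.update_apply, Function.comp, swapAdj, Equiv.swap_apply_def]
  split_ifs <;> first | rfl | omega

lemma Lop_special (b : Bool) (n : ℕ) (f : ℕ → List Bool) :
    Lop (1 : k) 0 b n (st k f) = st k (Function.update f n (b :: f n)) := by
  induction n generalizing f with
  | zero => rw [Lop, Dop_single]
  | succ n ih =>
    rw [Lop, Module.End.mul_apply, Module.End.mul_apply, Sop_special, ih, Sop_special]
    congr 1
    funext j
    simp only [Function.update_apply, Function.comp, swapAdj, Equiv.swap_apply_def]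
    split_ifs <;> first | rfl | omega | simp_all

lemma rep_special (g : HGen) (f : ℕ → List Bool) :
    rep (1 : k) 0 g (st k f) = st k (act g f) := by
  cases g <;> simp only [rep, Sop_special, Lop_special, act]

lemma list_special (l : List HGen) (f : ℕ → List Bool) :
    (l.map (rep (1 : k) 0)).prod (st k f) = st k (l.foldr act f) := by
  induction l with
  | nil => rfl
  | cons g l ih =>
    simp only [List.map_cons, List.prod_cons, Module.End.mul_apply, ih, rep_special,
      List.foldr_cons]

end Special

/-! ### Linear independence by specialisation -/

section Indep

open Polynomial

/-- A power series matrix which is the identity modulo the maximal ideal has rows independent over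
the polynomials in `h`, for `h ≠ 0` in the maximal ideal: a relation has all coefficients divisible
by the variable, which can be cancelled, so they are divisible by all its powers. -/
lemma descent {ι : Type*} [DecidableEq ι] (h : PowerSeries ℚ)
    (h0 : h ≠ 0) (hε : PowerSeries.constantCoeff h = 0) (M : ι → ι → PowerSeries ℚ)
    (hM : ∀ i j, PowerSeries.constantCoeff (M i j) = if i = j then 1 else 0)
    (c : ι →₀ ℚ[X]) (hc : ∀ j, (c.sum fun i a => aeval h a * M i j) = 0) : c = 0 := by
  have hε' : ∀ a : ℚ[X], PowerSeries.constantCoeff (aeval h a) = a.coeff 0 := by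
    intro a
    rw [aeval_def, hom_eval₂, hε, eval₂_at_zero]
    simp
  have key : ∀ (n : ℕ) (c : ι →₀ ℚ[X]), (∀ j, (c.sum fun i a => aeval h a * M i j) = 0) →
      ∀ i, X ^ n ∣ c i := by
    intro n
    induction n with
    | zero => intro c _ i; simp
    | succ n ih =>
      intro c hc
      have hX : ∀ i, X ∣ c i := by
        intro j
        have := congrArg PowerSeries.constantCoeff (hc j)
        simp only [Finsupp.sum, map_sum, map_mul, hε', hM, map_zero, mul_ite, mul_one, mul_zero,
          Finset.sum_ite_eq', Finsupp.mem_support_iff] at this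
        rw [X_dvd_iff]
        by_contra hne
        rw [if_pos (by rintro h; simp [h] at hne)] at this
        exact hne this
      choose d hd using hX
      let c' : ι →₀ ℚ[X] := Finsupp.onFinset c.support d (fun i hi => by
        rw [Finsupp.mem_support_iff, hd i]; exact mul_ne_zero X_ne_zero hi)
      have hc' : ∀ i, c i = X * c' i := hd
      intro i
      rw [hc' i, pow_succ']
      refine mul_dvd_mul_left _ (ih c' (fun j => ?_) i)
      have := hc j
      rw [Finsupp.sum] at this
      rw [Finsupp.sum_of_support_subset (s := c.support) _ Finsupp.support_onFinset_subset _
        (by simp)]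
      refine (mul_eq_zero.1 (?_ : h * _ = 0)).resolve_left h0
      rw [Finset.mul_sum, ← this]
      refine Finset.sum_congr rfl fun i _ => ?_
      rw [hc' i, map_mul, aeval_X, mul_assoc]
  ext1 i
  exact eq_zero_of_dvd_of_natDegree_lt (key ((c i).natDegree + 1) c hc i) (by simp)

/-- Products of generators are independent if, at `t = 1`, they take one basis state to different
basis states. -/
lemma indep_of_act {ι : Type*} (G : ι → List HGen) (f0 : ℕ → List Bool)
    (hG : Function.Injective fun p => (G p).foldr act f0) :
    LinearIndependent Kfield (fun p => ((G p).map gen).prod) := by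
  classical
  -- the parameter `t = 1 + X`, invertible as a power series, with `h = t - t⁻¹` in the maximal ideal
  obtain ⟨t, htd⟩ : ∃ t : PowerSeries ℚ, t = 1 + PowerSeries.X := ⟨_, rfl⟩
  have htc : PowerSeries.constantCoeff t = 1 := by simp [htd]
  have htt : t * t⁻¹ = 1 := PowerSeries.mul_inv_cancel t (by rw [htc]; exact one_ne_zero)
  obtain ⟨h, hhd⟩ : ∃ h : PowerSeries ℚ, h = t - t⁻¹ := ⟨_, rfl⟩
  have ht : t * (t - h) = 1 := by rw [hhd, sub_sub_cancel, htt]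
  have hε : PowerSeries.constantCoeff h = 0 := by
    have := congrArg PowerSeries.constantCoeff htt
    rw [map_mul, htc, one_mul, map_one] at this
    rw [hhd, map_sub, htc, this, sub_self]
  have h0 : h ≠ 0 := by
    rintro h0
    rw [h0, sub_zero] at ht
    have e := congrArg (PowerSeries.coeff 1) (show t * t = 1 + 2 * PowerSeries.X
      + PowerSeries.X ^ 2 by rw [htd]; ring)
    rw [ht, two_mul] at e
    norm_num [PowerSeries.coeff_one, PowerSeries.coeff_X_pow] at e
  have hinj : Function.Injective (aeval (R := ℚ) h) := by
    refine (injective_iff_map_eq_zero _).2 fun a ha => ?_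
    have := descent (ι := Unit) h h0 hε (fun _ _ => 1) (by simp) (Finsupp.single () a)
      (fun j => by simp [ha])
    simpa using this
  let K1 := FractionRing (PowerSeries ℚ)
  let φ : ℚ[X] →+* K1 := (algebraMap (PowerSeries ℚ) K1).comp (aeval (R := ℚ) h).toRingHom
  have hφ : Function.Injective φ := (IsFractionRing.injective (PowerSeries ℚ) K1).comp hinj
  let _ : Algebra Kfield K1 := (IsFractionRing.lift (K := Kfield) hφ).toAlgebra
  have hK : ∀ a : ℚ[X], algebraMap Kfield K1 (algebraMap ℚ[X] Kfield a) =
      algebraMap (PowerSeries ℚ) K1 (aeval h a) := fun a =>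
    IsFractionRing.lift_algebraMap hφ a
  have hh : algebraMap Kfield K1 hvar = algebraMap (PowerSeries ℚ) K1 h := by
    rw [hvar, ← RatFunc.algebraMap_X, hK, aeval_X]
  let _ : Algebra (PowerSeries ℚ) ℚ := (PowerSeries.constantCoeff (R := ℚ)).toAlgebra
  have hQ : ∀ a : PowerSeries ℚ, algebraMap (PowerSeries ℚ) ℚ a = PowerSeries.constantCoeff a :=
    fun _ => rfl
  have ht1 : algebraMap (PowerSeries ℚ) K1 t *
      (algebraMap (PowerSeries ℚ) K1 t - algebraMap (PowerSeries ℚ) K1 h) = 1 := by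
    rw [← map_sub, ← map_mul, ht, map_one]
  let Φ := repHom ht1 hh
  have : IsScalarTower ℚ[X] Kfield Hplus := inferInstance
  rw [← LinearIndependent.iff_fractionRing ℚ[X] Kfield, linearIndependent_iff]
  intro c hc
  let v : ι → PO (PowerSeries ℚ) := fun p => ((G p).map (rep t h)).prod (st _ f0)
  refine descent h h0 hε (fun i j => v i ((G j).foldr act f0)) (fun i j => ?_) c (fun j => ?_)
  · rw [← hQ, ← bc_apply (k' := ℚ)]
    have := bc_list (k' := ℚ) t h (G i) (st _ f0)
    rw [hQ, hQ, htc, hε, bc_single, list_special] at this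
    rw [this, Finsupp.single_apply]
    simp only [hG.eq_iff]
  · apply IsFractionRing.injective (PowerSeries ℚ) K1
    have hΦ : ∀ i, Φ ((G i).map gen).prod (st K1 f0) = bc K1 (v i) := by
      intro i
      rw [bc_list, bc_single, map_list_prod, List.map_map]
      congr 3
      funext g
      exact repHom_gen ht1 hh g
    have h1 := congrArg (fun y => Φ y (st K1 f0) ((G j).foldr act f0)) hc
    rw [Finsupp.linearCombination_apply, Finsupp.sum] at h1
    simp only [map_sum, map_zero, LinearMap.sum_apply, Finsupp.finsetSum_apply,
      LinearMap.zero_apply, Finsupp.coe_zero, Pi.zero_apply] at h1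
    rw [Finsupp.sum, map_sum, map_zero, ← h1]
    refine Finset.sum_congr rfl fun i _ => ?_
    rw [map_mul, ← hK, ← bc_apply (k' := K1), ← hΦ]
    rw [← algebraMap_smul Kfield (c i) ((G i).map gen).prod, map_smul, LinearMap.smul_apply,
      Finsupp.smul_apply, Algebra.smul_def]

end Indep
end SLD

namespace SLD

/-! ### Independence of the three families -/

section Families

/-- The generator `X_i` (for `b = true`) or `Y_i` (for `b = false`). -/
def letter (i : ℕ) (b : Bool) : HGen := if b then HGen.X i else HGen.Y i

lemma gen_letter (i : ℕ) (b : Bool) : gen (letter i b) = letterElem i b := by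
  cases b <;> rfl

/-- The list of generators spelling the words `u_i` at the sites `i` listed in `L`. -/
def spell (u : ℕ → List Bool) (L : List ℕ) : List HGen :=
  L.flatMap fun i => (u i).map (letter i)

lemma gen_spell (u : ℕ → List Bool) (L : List ℕ) :
    ((spell u L).map gen).prod = (L.map fun i => wordElem i (u i)).prod := by
  induction L with
  | nil => rfl
  | cons i L ih =>
    rw [spell, List.flatMap_cons, List.map_append, List.prod_append, ← spell, ih, List.map_cons,
      List.prod_cons, List.map_map, wordElem]
    congr 3
    funext b
    exact gen_letter i b

lemma gen_T (l : List ℕ) : ((l.map HGen.T).map gen).prod = Tword l := by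
  rw [List.map_map]; rfl

lemma act_word (i : ℕ) (p : List Bool) (f : ℕ → List Bool) :
    (p.map (letter i)).foldr act f = Function.update f i (p ++ f i) := by
  induction p with
  | nil => simp
  | cons b p ih =>
    rw [List.map_cons, List.foldr_cons, ih]
    cases b <;> simp [letter, act]

lemma act_spell (u : ℕ → List Bool) (L : List ℕ) (hL : L.Nodup) (f : ℕ → List Bool) :
    (spell u L).foldr act f = fun i => if i ∈ L then u i ++ f i else f i := by
  induction L with
  | nil => simp [spell]
  | cons i L ih =>
    rw [List.nodup_cons] at hL
    rw [spell, List.flatMap_cons, List.foldr_append, ← spell, ih hL.2, act_word]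
    funext j
    by_cases hj : j = i
    · subst hj; simp [hL.1]
    · simp [hj]

lemma act_T (l : List ℕ) (f : ℕ → List Bool) :
    (l.map HGen.T).foldr act f = f ∘ ⇑(wordPerm l)⁻¹ := by
  induction l with
  | nil => rfl
  | cons i l ih =>
    rw [List.map_cons, List.foldr_cons, ih]
    have : (wordPerm (i :: l))⁻¹ = (wordPerm l)⁻¹ * swapAdj i := by
      rw [wordPerm, List.map_cons, List.prod_cons, mul_inv_rev, swapAdj, Equiv.swap_inv]; rfl
    rw [this]
    rfl

/-- The initial state: its entries form a suffix code, so that a word followed by an entry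
determines both. -/
def code (j : ℕ) : List Bool := false :: List.replicate j true

lemma code_inj {p q : List Bool} {a b : ℕ} (H : p ++ code a = q ++ code b) : a = b ∧ p = q := by
  have key : ∀ (a b : ℕ) (p q : List Bool),
      List.replicate a true ++ false :: p = List.replicate b true ++ false :: q → a = b := by
    intro a
    induction a with
    | zero => intro b p q H; cases b <;> simp_all [List.replicate_succ]
    | succ a ih =>
      intro b p q H
      cases b with
      | zero => simp [List.replicate_succ] at H
      | succ b => simp only [List.replicate_succ, List.cons_append, List.cons.injEq, true_and] at H
                  rw [ih b p q H]
  have hab : a = b := by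
    have := congrArg List.reverse H
    simp only [code, List.reverse_append, List.reverse_cons, List.reverse_replicate,
      List.append_assoc, List.singleton_append] at this
    exact key a b _ _ this
  subst hab
  exact ⟨rfl, List.append_cancel_right H⟩

lemma act_spell_finsupp (u : ℕ →₀ List Bool) (L : List ℕ) (hL : L.Nodup)
    (hs : ∀ i, i < u.support.sup id + 1 → i ∈ L) (f : ℕ → List Bool) :
    (spell u L).foldr act f = fun i => u i ++ f i := by
  rw [act_spell u L hL]
  funext i
  split_ifs with hi
  · rfl
  · have : u i = [] := by
      by_contra hne
      exact hi (hs i (Nat.lt_succ_of_le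
        (Finset.le_sup (f := id) (Finsupp.mem_support_iff.2 hne))))
    rw [this, List.nil_append]

variable (rw' : FinPerm → List ℕ)

/-- The sites up to the last one carrying a nonempty word, in increasing order. -/
def sites (u : ℕ →₀ List Bool) : List ℕ := List.range (u.support.sup id + 1)

/-- The generators spelling the standard words of types (i), (ii), (iii). -/
def spell3 (p : (ℕ →₀ List Bool) × FinPerm) : Fin 3 → List HGen
  | 0 => spell p.1 (sites p.1).reverse ++ (rw' p.2).map HGen.T
  | 1 => (rw' p.2).map HGen.T ++ spell p.1 (sites p.1)
  | 2 => (rw' p.2).map HGen.T ++ spell p.1 (sites p.1).reverse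

/-- The standard words of types (i), (ii), (iii). -/
def stdWord (p : (ℕ →₀ List Bool) × FinPerm) : Fin 3 → Hplus
  | 0 => stdWordI rw' p.1 p.2
  | 1 => stdWordII rw' p.1 p.2
  | 2 => stdWordIII rw' p.1 p.2

lemma stdWord_eq (p : (ℕ →₀ List Bool) × FinPerm) (c : Fin 3) :
    stdWord rw' p c = ((spell3 rw' p c).map gen).prod := by
  fin_cases c <;>
  simp only [spell3, List.map_append, List.prod_append, gen_spell, gen_T] <;> rfl

variable (hrw_eq : ∀ w : FinPerm, wordPerm (rw' w) = w.1)
include hrw_eq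

/-- At `t = 1` a standard word takes the state `code` to a state determining the word: the suffix
of each entry gives the permutation, the rest gives the words `u_i`. -/
lemma stdWord_indep (c : Fin 3) :
    LinearIndependent Kfield fun p : (ℕ →₀ List Bool) × FinPerm => stdWord rw' p c := by
  simp only [stdWord_eq]
  refine indep_of_act (fun p => spell3 rw' p c) code ?_
  have nd : ∀ u : ℕ →₀ List Bool, (sites u).Nodup := fun u => List.nodup_range
  have e1 : ∀ u : ℕ →₀ List Bool, ∀ f, (spell u (sites u)).foldr act f = fun i => u i ++ f i :=
    fun u => act_spell_finsupp u _ (nd u) fun i hi => List.mem_range.2 hi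
  have e2 : ∀ u : ℕ →₀ List Bool, ∀ f,
      (spell u (sites u).reverse).foldr act f = fun i => u i ++ f i :=
    fun u => act_spell_finsupp u _ (List.nodup_reverse.2 (nd u)) fun i hi =>
      List.mem_reverse.2 (List.mem_range.2 hi)
  have inj1 : ∀ w w' : FinPerm, (∀ i, w.1⁻¹ i = w'.1⁻¹ i) → w = w' := fun w w' H =>
    Subtype.ext (inv_injective (Equiv.ext H))
  have caseII : ∀ (u u' : ℕ →₀ List Bool) (w w' : FinPerm),
      ((fun i => u i ++ code i) ∘ ⇑(w.1⁻¹)) = ((fun i => u' i ++ code i) ∘ ⇑(w'.1⁻¹)) →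
      (u, w) = (u', w') := by
    intro u u' w w' H
    have H' := fun i => code_inj (congrFun H i)
    have hw := inj1 w w' fun i => (H' i).1
    subst hw
    refine Prod.ext (Finsupp.ext fun i => ?_) rfl
    simpa using (H' (w.1 i)).2
  rintro ⟨u, w⟩ ⟨u', w'⟩ H
  fin_cases c
  · simp only [spell3, List.foldr_append, act_T, hrw_eq, e2, Function.comp] at H
    have H' := fun i => code_inj (congrFun H i)
    exact Prod.ext (Finsupp.ext fun i => (H' i).2) (inj1 w w' fun i => (H' i).1)
  · simp only [spell3, List.foldr_append, act_T, hrw_eq, e1] at H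
    exact caseII _ _ _ _ H
  · simp only [spell3, List.foldr_append, act_T, hrw_eq, e2] at H
    exact caseII _ _ _ _ H

end Families
end SLD

namespace SLD

/-! ### Relations in `H⁺` -/

section Relations

/-- `T_i` (for `b = false`) or its inverse (for `b = true`), so that
`letterElem (i + 1) b = sg i b * letterElem i b * sg i b`. -/
def sg (i : ℕ) (b : Bool) : Hplus := if b then gen (HGen.T' i) else gen (HGen.T i)

lemma relE {x y : FreeAlgebra Kfield HGen} (H : HRel x y) :
    RingQuot.mkAlgHom Kfield HRel x = RingQuot.mkAlgHom Kfield HRel y :=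
  RingQuot.mkAlgHom_rel Kfield H

lemma sg_inv (i : ℕ) (b : Bool) : sg i b * sg i (!b) = 1 := by
  cases b
  · have e := relE (HRel.TT' i); simp only [map_mul, map_one] at e; exact e
  · have e := relE (HRel.T'T i); simp only [map_mul, map_one] at e; exact e

lemma sg_inv' (i : ℕ) (b : Bool) : sg i (!b) * sg i b = 1 := by
  simpa using sg_inv i (!b)

lemma sg_diff (i : ℕ) : sg i false = sg i true + hvar • 1 := by
  have := relE (HRel.TminusT' i)
  rw [map_sub, AlgHom.commutes, Algebra.algebraMap_eq_smul_one] at this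
  exact sub_eq_iff_eq_add'.1 this

lemma sg_eq (i : ℕ) (b : Bool) : sg i b = sg i false - cb hvar b • 1 := by
  cases b
  · simp [cb]
  · rw [sg_diff, cb, if_pos rfl, add_sub_cancel_right]

lemma letter_succ (i : ℕ) (b : Bool) :
    letterElem (i + 1) b = sg i b * letterElem i b * sg i b := by
  cases b
  · have e := (relE (HRel.TYT i)).symm; simp only [map_mul] at e; exact e
  · have e := (relE (HRel.TXT i)).symm; simp only [map_mul] at e; exact e

lemma commute_sg {x : Hplus} {i : ℕ} (hx : Commute (sg i false) x) (b : Bool) :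
    Commute (sg i b) x := by
  rw [sg_eq]
  exact hx.sub_left ((Commute.one_left x).smul_left _)

lemma sg_comm {i j : ℕ} (hij : i + 1 < j ∨ j + 1 < i) (a b : Bool) :
    Commute (sg i a) (sg j b) := by
  refine commute_sg (commute_sg ?_ b).symm a
  have e := (relE (HRel.Tcomm i j hij)).symm; simp only [map_mul] at e; exact e

lemma sg_letter {i j : ℕ} (h1 : j ≠ i) (h2 : j ≠ i + 1) (a b : Bool) :
    Commute (sg i a) (letterElem j b) := by
  refine commute_sg ?_ a
  cases b
  · have e := relE (HRel.TY i j h1 h2); simp only [map_mul] at e; exact e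
  · have e := relE (HRel.TX i j h1 h2); simp only [map_mul] at e; exact e

lemma letter_comm (i j : ℕ) (b : Bool) : Commute (letterElem i b) (letterElem j b) := by
  cases b
  · have e := relE (HRel.YY i j); simp only [map_mul] at e; exact e
  · have e := relE (HRel.XX i j); simp only [map_mul] at e; exact e

lemma sg_braid (i : ℕ) : sg i false * sg (i + 1) false * sg i false =
    sg (i + 1) false * sg i false * sg (i + 1) false := by
  have e := relE (HRel.braid i); simp only [map_mul] at e; exact e

lemma cross_zero : letterElem 0 false * sg 0 false * letterElem 0 true =
    letterElem 1 true * letterElem 0 false * sg 0 false := by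
  have e := relE HRel.cross; simp only [map_mul] at e; exact e

/-- A form of the braid relation with inverses. -/
lemma sg_conj (i : ℕ) (b : Bool) : sg (i + 1) (!b) * sg i b * sg (i + 1) b =
    sg i b * sg (i + 1) b * sg i (!b) := by
  have j1 : sg i true * sg i false = 1 := sg_inv i true
  have j1' : sg i false * sg i true = 1 := sg_inv i false
  have j2 : sg (i + 1) true * sg (i + 1) false = 1 := sg_inv (i + 1) true
  have j2' : sg (i + 1) false * sg (i + 1) true = 1 := sg_inv (i + 1) false
  have h1 : sg (i + 1) true * sg i false * sg (i + 1) false =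
      sg i false * sg (i + 1) false * sg i true := by
    calc sg (i + 1) true * sg i false * sg (i + 1) false
        = sg (i + 1) true * sg i false * sg (i + 1) false * (sg i false * sg i true) := by
          rw [j1', mul_one]
      _ = sg (i + 1) true * (sg i false * sg (i + 1) false * sg i false) * sg i true := by
          simp only [mul_assoc]
      _ = (sg (i + 1) true * sg (i + 1) false) * sg i false * sg (i + 1) false * sg i true := by
          rw [sg_braid]; simp only [mul_assoc]
      _ = _ := by rw [j2, one_mul]
  cases b
  · exact h1
  · calc sg (i + 1) false * sg i true * sg (i + 1) true
        = (sg i true * sg i false) * (sg (i + 1) false * sg i true * sg (i + 1) true) := by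
          rw [j1, one_mul]
      _ = sg i true * (sg i false * sg (i + 1) false * sg i true) * sg (i + 1) true := by
          simp only [mul_assoc]
      _ = sg i true * sg (i + 1) true * sg i false * (sg (i + 1) false * sg (i + 1) true) := by
          rw [← h1]; simp only [mul_assoc]
      _ = _ := by rw [j2', mul_one]; rfl

/-- The relation between different letters at adjacent sites; it propagates from the first site
by conjugation with the `T_i`. -/
lemma cross_letter (i : ℕ) (b : Bool) : letterElem (i + 1) (!b) * letterElem i b =
    letterElem i b * (sg i b * sg i b) * letterElem (i + 1) (!b) := by
  induction i with
  | zero =>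
    have j1 : sg 0 true * sg 0 false = 1 := sg_inv 0 true
    have j1' : sg 0 false * sg 0 true = 1 := sg_inv 0 false
    cases b
    · rw [Bool.not_false]
      calc letterElem 1 true * letterElem 0 false
          = letterElem 1 true * letterElem 0 false * (sg 0 false * sg 0 true) := by
            rw [j1', mul_one]
        _ = letterElem 0 false * sg 0 false * letterElem 0 true * sg 0 true := by
            rw [cross_zero]; simp only [mul_assoc]
        _ = letterElem 0 false * sg 0 false * (sg 0 false * sg 0 true) * letterElem 0 true
              * sg 0 true := by rw [j1', mul_one]
        _ = _ := by rw [letter_succ]; simp only [mul_assoc]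
    · rw [Bool.not_true]
      calc letterElem 1 false * letterElem 0 true
          = sg 0 false * (letterElem 0 false * sg 0 false * letterElem 0 true) := by
            rw [letter_succ]; simp only [mul_assoc]
        _ = (sg 0 false * sg 0 true) * letterElem 0 true * sg 0 true * (sg 0 true * sg 0 false)
              * letterElem 0 false * sg 0 false := by
            rw [cross_zero, letter_succ, j1, mul_one]; simp only [mul_assoc]
        _ = _ := by rw [letter_succ, j1', one_mul]; simp only [mul_assoc]
  | succ i ih =>
    have c1 : ∀ c, letterElem (i + 1 + 1) (!b) * sg i c = sg i c * letterElem (i + 1 + 1) (!b) :=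
      fun c => (sg_letter (by omega) (by omega) _ _).eq.symm
    have c2 : ∀ c, sg (i + 1) c * letterElem i b = letterElem i b * sg (i + 1) c :=
      fun c => (sg_letter (by omega) (by omega) _ _).eq
    have j1 := sg_inv' i b
    have j2 := sg_inv (i + 1) b
    have h1 : letterElem (i + 1 + 1) (!b) * letterElem i b =
        letterElem i b * (sg (i + 1) (!b) * sg i b * sg (i + 1) b) *
          (sg (i + 1) (!b) * sg i b * sg (i + 1) b) * letterElem (i + 1 + 1) (!b) := by
      calc letterElem (i + 1 + 1) (!b) * letterElem i b
          = sg (i + 1) (!b) * letterElem (i + 1) (!b) * (sg (i + 1) (!b) * letterElem i b) := by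
            rw [letter_succ (i + 1)]; simp only [mul_assoc]
        _ = sg (i + 1) (!b) * (letterElem (i + 1) (!b) * letterElem i b) * sg (i + 1) (!b) := by
            rw [c2]; simp only [mul_assoc]
        _ = (sg (i + 1) (!b) * letterElem i b) * sg i b * sg i b * letterElem (i + 1) (!b)
              * sg (i + 1) (!b) := by rw [ih]; simp only [mul_assoc]
        _ = letterElem i b * sg (i + 1) (!b) * sg i b * (sg (i + 1) b * sg (i + 1) (!b)) * sg i b
              * (sg (i + 1) b * sg (i + 1) (!b)) * letterElem (i + 1) (!b)
              * sg (i + 1) (!b) := by rw [c2, j2, mul_one, mul_one]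
        _ = _ := by rw [letter_succ (i + 1)]; simp only [mul_assoc]
    rw [sg_conj] at h1
    calc letterElem (i + 1 + 1) (!b) * letterElem (i + 1) b
        = letterElem (i + 1 + 1) (!b) * sg i b * letterElem i b * sg i b := by
          rw [letter_succ i]; simp only [mul_assoc]
      _ = sg i b * (letterElem (i + 1 + 1) (!b) * letterElem i b) * sg i b := by
          rw [c1]; simp only [mul_assoc]
      _ = sg i b * letterElem i b * sg i b * sg (i + 1) b * (sg i (!b) * sg i b) * sg (i + 1) b
            * sg i (!b) * (letterElem (i + 1 + 1) (!b) * sg i b) := by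
          rw [h1]; simp only [mul_assoc]
      _ = sg i b * letterElem i b * sg i b * sg (i + 1) b * sg (i + 1) b
            * (sg i (!b) * (sg i b * letterElem (i + 1 + 1) (!b))) := by
          rw [j1, c1, mul_one]; simp only [mul_assoc]
      _ = _ := by rw [← mul_assoc (sg i !b), j1, one_mul, letter_succ i]; simp only [mul_assoc]

end Relations

/-! ### Straightening at two adjacent sites -/

section TwoSite

/-- The span of the products `p q z` in degree `d` at the sites `i`, `i + 1`,
where `z = 1` or `z = T_i`. -/
def N2 (i d : ℕ) : Submodule Kfield Hplus :=
  Submodule.span Kfield {x | ∃ p q : List Bool, ∃ z : Hplus, p.length + q.length = d ∧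
    (z = 1 ∨ z = sg i false) ∧ x = wordElem i p * wordElem (i + 1) q * z}

lemma wordElem_cons (i : ℕ) (b : Bool) (p : List Bool) :
    wordElem i (b :: p) = letterElem i b * wordElem i p := by
  rw [wordElem, List.map_cons, List.prod_cons, wordElem]

lemma wordElem_nil (i : ℕ) : wordElem i [] = 1 := rfl

lemma left_mem {V W : Submodule Kfield Hplus} {s : Set Hplus} (hV : V = Submodule.span Kfield s)
    {a : Hplus} (H : ∀ x ∈ s, a * x ∈ W) {x : Hplus} (hx : x ∈ V) : a * x ∈ W := by
  rw [hV] at hx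
  exact (Submodule.span_le (p := W.comap (LinearMap.mulLeft Kfield a))).2 H hx

lemma letter_N2 {i d : ℕ} (b : Bool) {x : Hplus} (hx : x ∈ N2 i d) :
    letterElem i b * x ∈ N2 i (d + 1) := by
  refine left_mem rfl ?_ hx
  rintro _ ⟨p, q, z, hd, hz, rfl⟩
  refine Submodule.subset_span ⟨b :: p, q, z, by simp; omega, hz, ?_⟩
  rw [wordElem_cons]
  simp only [mul_assoc]

/-- Straightening: `T_i` and the letters at site `i + 1` preserve the two-site spans. The two claims
are proved by simultaneous induction on the degree. -/
lemma N2_straighten (i d : ℕ) : (∀ x ∈ N2 i d, sg i false * x ∈ N2 i d) ∧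
    ∀ a, ∀ x ∈ N2 i d, letterElem (i + 1) a * x ∈ N2 i (d + 1) := by
  have ofT : ∀ {d}, (∀ x ∈ N2 i d, sg i false * x ∈ N2 i d) →
      ∀ b, ∀ x ∈ N2 i d, sg i b * x ∈ N2 i d := by
    intro d H b x hx
    rw [sg_eq, sub_mul, smul_mul_assoc, one_mul]
    exact sub_mem (H x hx) (Submodule.smul_mem _ _ hx)
  have ofS : ∀ {d} {x : Hplus} b, x ∈ N2 i d → sg i b * x ∈ N2 i d → sg i false * x ∈ N2 i d := by
    intro d x b hx h
    rw [sg_eq, sub_mul, smul_mul_assoc, one_mul] at h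
    simpa using add_mem h (Submodule.smul_mem _ (cb hvar b) hx)
  have mem : ∀ {d} {p q z}, p.length + q.length = d → (z = 1 ∨ z = sg i false) →
      wordElem i p * wordElem (i + 1) q * z ∈ N2 i d := fun h1 h2 =>
    Submodule.subset_span ⟨_, _, _, h1, h2, rfl⟩
  induction d with
  | zero =>
    have hT : ∀ x ∈ N2 i 0, sg i false * x ∈ N2 i 0 := fun x hx => by
      refine left_mem rfl ?_ hx
      rintro _ ⟨p, q, z, hd, hz, rfl⟩
      have hp : p = [] := List.length_eq_zero_iff.1 (by omega)
      have hq : q = [] := List.length_eq_zero_iff.1 (by omega)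
      subst hp hq
      rw [wordElem_nil, wordElem_nil, one_mul, one_mul]
      have m1 : (1 : Hplus) ∈ N2 i 0 := by
        simpa [wordElem_nil] using mem (d := 0) (p := []) (q := []) (z := 1) rfl (Or.inl rfl)
      have m2 : sg i false ∈ N2 i 0 := by
        simpa [wordElem_nil] using mem (d := 0) (p := []) (q := []) rfl (Or.inr rfl)
      rcases hz with rfl | rfl
      · rwa [mul_one]
      · refine ofS true m2 ?_
        rwa [show sg i true * sg i false = 1 from sg_inv i true]
    refine ⟨hT, fun a x hx => left_mem rfl ?_ hx⟩
    rintro _ ⟨p, q, z, hd, hz, rfl⟩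
    have hp : p = [] := List.length_eq_zero_iff.1 (by omega)
    subst hp
    rw [wordElem_nil, one_mul, ← mul_assoc, ← wordElem_cons, ← one_mul (wordElem _ _),
      ← wordElem_nil i]
    exact mem (by simpa using hd) hz
  | succ d ih =>
    have hT : ∀ x ∈ N2 i (d + 1), sg i false * x ∈ N2 i (d + 1) := fun x hx => by
      refine left_mem rfl ?_ hx
      rintro _ ⟨p, q, z, hd, hz, rfl⟩
      have hm := mem hd hz
      match p, q, hd with
      | b :: p, q, hd =>
        have hx' : wordElem i p * wordElem (i + 1) q * z ∈ N2 i d := mem (by simp at hd; omega) hz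
        refine ofS b hm ?_
        have : sg i b * (wordElem i (b :: p) * wordElem (i + 1) q * z) =
            letterElem (i + 1) b * (sg i (!b) * (wordElem i p * wordElem (i + 1) q * z)) := by
          rw [letter_succ, wordElem_cons]
          simp only [← mul_assoc]
          rw [mul_assoc (sg i b * letterElem i b) (sg i b), sg_inv, mul_one]
        rw [this]
        exact ih.2 b _ (ofT ih.1 _ _ hx')
      | [], b :: q, hd =>
        have hx' : wordElem i [] * wordElem (i + 1) q * z ∈ N2 i d := mem (by simpa using hd) hz
        refine ofS (!b) hm ?_
        have : sg i (!b) * (wordElem i [] * wordElem (i + 1) (b :: q) * z) =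
            letterElem i b * (sg i b * (wordElem i [] * wordElem (i + 1) q * z)) := by
          rw [wordElem_cons, letter_succ, wordElem_nil, one_mul, one_mul]
          simp only [← mul_assoc]
          rw [sg_inv', one_mul]
        rw [this]
        exact letter_N2 b (ofT ih.1 _ _ hx')
    refine ⟨hT, fun a x hx => left_mem rfl ?_ hx⟩
    rintro _ ⟨p, q, z, hd, hz, rfl⟩
    match p, hd with
    | [], hd =>
      rw [wordElem_nil, one_mul, ← mul_assoc, ← wordElem_cons, ← one_mul (wordElem _ _),
        ← wordElem_nil i]
      exact mem (by simpa using hd) hz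
    | b :: p, hd =>
      have hx' := ih.2 a _ (mem (p := p) (q := q) (by simp at hd; omega) hz)
      by_cases hab : a = b
      · subst hab
        have : letterElem (i + 1) a * (wordElem i (a :: p) * wordElem (i + 1) q * z) =
            letterElem i a * (letterElem (i + 1) a * (wordElem i p * wordElem (i + 1) q * z)) := by
          rw [wordElem_cons]
          simp only [← mul_assoc]
          rw [(letter_comm (i + 1) i a).eq]
        rw [this]
        exact letter_N2 _ hx'
      · obtain rfl : a = !b := Bool.eq_not.2 hab
        have : letterElem (i + 1) (!b) * (wordElem i (b :: p) * wordElem (i + 1) q * z) =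
            letterElem i b * (sg i b * (sg i b *
              (letterElem (i + 1) (!b) * (wordElem i p * wordElem (i + 1) q * z)))) := by
          rw [wordElem_cons]
          simp only [← mul_assoc]
          rw [cross_letter]
          simp only [mul_assoc]
        rw [this]
        exact letter_N2 _ (ofT hT _ _ (ofT hT _ _ hx'))

end TwoSite
end SLD

namespace SLD

/-! ### Coset representatives for symmetric groups and Hecke algebras -/

section Seg

/-- The descending list `m, m - 1, …` of length `r`. The corresponding words represent the
cosets of `S_{m+1}` in `S_{m+2}`. -/
def seg (m : ℕ) : ℕ → List ℕ
  | 0 => []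
  | r + 1 => seg m r ++ [m - r]

lemma length_seg (m r : ℕ) : (seg m r).length = r := by
  induction r with
  | zero => rfl
  | succ r ih => simp [seg, ih]

lemma mem_seg {m r j : ℕ} (hr : r ≤ m + 1) : j ∈ seg m r ↔ m < j + r ∧ j ≤ m := by
  induction r with
  | zero => simp [seg]
  | succ r ih => simp only [seg, List.mem_append, ih (by omega), List.mem_singleton]; omega

variable {M : Type*} [Monoid M] {s : ℕ → M}

lemma seg_comm (hs : ∀ i j, i + 1 < j → Commute (s i) (s j)) {m r j : ℕ} (hj : j + r < m) :
    ((seg m r).map s).prod * s j = s j * ((seg m r).map s).prod := by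
  induction r with
  | zero => simp [seg]
  | succ r ih =>
    rw [seg, List.map_append, List.prod_append, List.map_singleton, List.prod_singleton, mul_assoc,
      ← (hs j (m - r) (by omega)).eq, ← mul_assoc, ih (by omega), mul_assoc]

lemma seg_shift (hs : ∀ i j, i + 1 < j → Commute (s i) (s j))
    (hbr : ∀ i, s i * s (i + 1) * s i = s (i + 1) * s i * s (i + 1)) {m r j : ℕ} (hj : j + 1 ≤ m)
    (hr : m < j + r) (hrm : r ≤ m + 1) :
    ((seg m r).map s).prod * s (j + 1) = s j * ((seg m r).map s).prod := by
  induction r with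
  | zero => omega
  | succ r ih =>
    rcases Nat.lt_or_ge m (j + r) with h | h
    · rw [seg, List.map_append, List.prod_append, List.map_singleton, List.prod_singleton,
        mul_assoc, (hs (m - r) (j + 1) (by omega)).eq, ← mul_assoc, ih h (by omega), mul_assoc]
    · obtain ⟨r, rfl⟩ : ∃ r', r = r' + 1 := ⟨r - 1, by omega⟩
      have e1 : m - r = j + 1 := by omega
      have e2 : m - (r + 1) = j := by omega
      simp only [seg, List.map_append, List.prod_append, List.map_singleton, List.prod_singleton,
        e1, e2]
      rw [mul_assoc _ (s (j + 1)), mul_assoc, ← hbr, ← mul_assoc, ← mul_assoc,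
        seg_comm hs (by omega)]
      simp only [mul_assoc]

end Seg

section Perm

lemma swapAdj_comm {i j : ℕ} (hij : i + 1 < j) : Commute (swapAdj i) (swapAdj j) := by
  refine (Equiv.Perm.disjoint_iff_eq_or_eq.2 fun x => ?_).commute
  simp only [swapAdj, Equiv.swap_apply_def]
  split_ifs <;> omega

lemma swapAdj_braid (i : ℕ) : swapAdj i * swapAdj (i + 1) * swapAdj i =
    swapAdj (i + 1) * swapAdj i * swapAdj (i + 1) := by
  ext x
  simp only [swapAdj, Equiv.swap_apply_def, Equiv.Perm.mul_apply]
  split_ifs <;> omega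

lemma swapAdj_sq (i : ℕ) : swapAdj i * swapAdj i = 1 := Equiv.swap_mul_self _ _

lemma wordPerm_append (l l' : List ℕ) : wordPerm (l ++ l') = wordPerm l * wordPerm l' := by
  rw [wordPerm, List.map_append, List.prod_append]; rfl

lemma wordPerm_singleton (j : ℕ) : wordPerm [j] = swapAdj j := by simp [wordPerm]

/-- Every word can be brought into the form `l' ++ seg m r` with `l'` using smaller letters,
without becoming longer, and even becoming shorter if the letter `m` disappears. -/
lemma word_normal (m : ℕ) (l : List ℕ) (hl : ∀ i ∈ l, i ≤ m) :
    ∃ (l' : List ℕ) (r : ℕ), (∀ i ∈ l', i < m) ∧ r ≤ m + 1 ∧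
      wordPerm l = wordPerm l' * wordPerm (seg m r) ∧ l'.length + r ≤ l.length ∧
      (m ∈ l → r = 0 → l'.length < l.length) := by
  induction l using List.reverseRecOn with
  | nil => exact ⟨[], 0, by simp, by omega, by simp [seg, wordPerm], by simp, by simp⟩
  | append_singleton l j ih =>
    obtain ⟨l', r, h1, h2, h3, h4, h5⟩ := ih fun i hi => hl i (by simp [hi])
    have hj : j ≤ m := hl j (by simp)
    have hlen : (l ++ [j]).length = l.length + 1 := by simp
    rw [wordPerm_append, wordPerm_singleton, h3, hlen]
    rcases Nat.lt_or_ge (m + 1) (j + r) with hc | hc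
    · obtain ⟨j, rfl⟩ : ∃ j', j = j' + 1 := ⟨j - 1, by omega⟩
      refine ⟨l' ++ [j], r, ?_, h2, ?_, by simp; omega, by omega⟩
      · intro i hi
        rcases List.mem_append.1 hi with hi | hi
        · exact h1 i hi
        · rw [List.mem_singleton] at hi; omega
      · rw [wordPerm_append, wordPerm_singleton, mul_assoc, mul_assoc]
        congr 1
        exact seg_shift (fun i j => swapAdj_comm) swapAdj_braid hj (by omega) h2
    rcases Nat.eq_or_lt_of_le hc with hc | hc
    · obtain ⟨r, rfl⟩ : ∃ r', r = r' + 1 := ⟨r - 1, by omega⟩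
      refine ⟨l', r, h1, by omega, ?_, by omega, by omega⟩
      rw [seg, wordPerm_append, wordPerm_singleton, show m - r = j by omega, mul_assoc, mul_assoc,
        swapAdj_sq, mul_one]
    rcases Nat.eq_or_lt_of_le (Nat.le_of_lt_succ hc) with hc | hc
    · refine ⟨l', r + 1, h1, by omega, ?_, by omega, by omega⟩
      rw [seg, wordPerm_append, wordPerm_singleton, show m - r = j by omega, mul_assoc]
    · refine ⟨l' ++ [j], r, ?_, h2, ?_, by simp; omega, ?_⟩
      · intro i hi
        rcases List.mem_append.1 hi with hi | hi
        · exact h1 i hi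
        · rw [List.mem_singleton] at hi; omega
      · rw [wordPerm_append, wordPerm_singleton, mul_assoc, mul_assoc]
        congr 1
        exact seg_comm (fun i j => swapAdj_comm) hc
      · intro hm hr
        have : m ∈ l := by
          rcases List.mem_append.1 hm with hm | hm
          · exact hm
          · rw [List.mem_singleton] at hm; omega
        have := h5 this hr
        simp; omega

lemma wordPerm_le {m : ℕ} {l : List ℕ} (hl : ∀ i ∈ l, i < m) {x : ℕ} (hx : x ≤ m) :
    wordPerm l x ≤ m := by
  induction l with
  | nil => exact hx
  | cons i l ih =>
    have h1 := ih fun i hi => hl i (List.mem_cons_of_mem _ hi)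
    have h2 := hl i List.mem_cons_self
    rw [wordPerm, List.map_cons, List.prod_cons, Equiv.Perm.mul_apply, ← wordPerm, swapAdj,
      Equiv.swap_apply_def]
    split_ifs <;> omega

lemma wordPerm_seg {m r : ℕ} (hr : r ≤ m) : wordPerm (seg m (r + 1)) (m + 1) = m := by
  induction r with
  | zero => simp [seg, wordPerm, swapAdj]
  | succ r ih =>
    rw [seg, wordPerm_append, wordPerm_singleton, Equiv.Perm.mul_apply, swapAdj,
      Equiv.swap_apply_of_ne_of_ne (by omega) (by omega), ih (by omega)]

/-- A reduced word of a permutation fixing all `i ≥ n` uses only `s_i` with `i + 1 < n`. -/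
lemma reduced_letters {n : ℕ} {l : List ℕ} (hfix : ∀ i, n ≤ i → wordPerm l i = i)
    (hred : ∀ l', wordPerm l' = wordPerm l → l.length ≤ l'.length) : ∀ i ∈ l, i + 1 < n := by
  by_contra! H
  obtain ⟨i, hi, hin⟩ := H
  obtain ⟨m, hm, hmax⟩ := l.toFinset.exists_max_image id ⟨i, List.mem_toFinset.2 hi⟩
  rw [List.mem_toFinset] at hm
  have hmax' : ∀ j ∈ l, j ≤ m := fun j hj => hmax j (List.mem_toFinset.2 hj)
  obtain ⟨l', r, h1, h2, h3, -, h5⟩ := word_normal m l hmax'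
  have him := hmax' i hi
  cases r with
  | zero =>
    have : wordPerm l' = wordPerm l := by rw [h3]; simp [seg, wordPerm]
    exact absurd (hred l' this) (not_le.2 (h5 hm rfl))
  | succ r =>
    have := hfix (m + 1) (by omega)
    rw [h3, Equiv.Perm.mul_apply, wordPerm_seg (by omega)] at this
    have := wordPerm_le h1 (le_refl m)
    omega

end Perm

section Hecke

/-- The finite Hecke algebra generated by the `T_i` with `i + 1 < n`. -/
def Hn (n : ℕ) : Subalgebra Kfield Hplus :=
  Algebra.adjoin Kfield {x | ∃ i, i + 1 < n ∧ x = sg i false}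

lemma Hn_mono {n n' : ℕ} (hn : n ≤ n') : Hn n ≤ Hn n' :=
  Algebra.adjoin_mono fun _ ⟨i, hi, e⟩ => ⟨i, by omega, e⟩

lemma sg_mem_Hn {i n : ℕ} (hi : i + 1 < n) : sg i false ∈ Hn n :=
  Algebra.subset_adjoin ⟨i, hi, rfl⟩

/-- Words of the `n!` standard basis elements of the Hecke algebra of `S_n`. -/
def Code : ℕ → List (List ℕ)
  | 0 => [[]]
  | 1 => [[]]
  | m + 2 => (Code (m + 1)).flatMap fun c => (List.range (m + 2)).map fun r => c ++ seg m r

lemma length_Code (n : ℕ) : (Code n).length = n.factorial := by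
  induction n using Code.induct with
  | case1 => rfl
  | case2 => rfl
  | case3 m ih =>
    rw [Code, List.length_flatMap]
    simp only [List.length_map, List.length_range, List.map_const', List.sum_replicate, ih,
      Nat.factorial_succ, smul_eq_mul]
    ring

/-- The span of the standard basis elements of the Hecke algebra of `S_n`. -/
def CodeSpan (n : ℕ) : Submodule Kfield Hplus := Submodule.span Kfield {x | ∃ c ∈ Code n, x = Tword c}

lemma Tword_append (l l' : List ℕ) : Tword (l ++ l') = Tword l * Tword l' := by
  rw [Tword, List.map_append, List.prod_append]; rfl

lemma right_mem {V W : Submodule Kfield Hplus} {s : Set Hplus} (hV : V = Submodule.span Kfield s)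
    {a : Hplus} (H : ∀ x ∈ s, x * a ∈ W) {x : Hplus} (hx : x ∈ V) : x * a ∈ W := by
  rw [hV] at hx
  exact (Submodule.span_le (p := W.comap (LinearMap.mulRight Kfield a))).2 H hx

lemma one_mem_CodeSpan (n : ℕ) : (1 : Hplus) ∈ CodeSpan n := by
  refine Submodule.subset_span ⟨[], ?_, rfl⟩
  induction n using Code.induct with
  | case1 => simp [Code]
  | case2 => simp [Code]
  | case3 m ih =>
    exact List.mem_flatMap.2 ⟨_, ih, List.mem_map.2 ⟨0, by simp, rfl⟩⟩

lemma sg_sq (i : ℕ) : sg i false * sg i false = 1 + hvar • sg i false := by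
  have := sg_diff i
  calc sg i false * sg i false = (sg i true + hvar • 1) * sg i false := by rw [← this]
    _ = _ := by rw [add_mul, smul_mul_assoc, one_mul, show sg i true * sg i false = 1 from
                sg_inv i true]

/-- The standard basis elements span a right ideal of the Hecke algebra: the coset representative
`seg m r` times a generator is either a representative, or a generator of the smaller Hecke algebra
times the same representative, up to the quadratic relation. -/
lemma CodeSpan_mul (n : ℕ) : ∀ i, i + 1 < n → ∀ x ∈ CodeSpan n, x * sg i false ∈ CodeSpan n := by
  induction n using Code.induct with
  | case1 => intro i hi; omega
  | case2 => intro i hi; omega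
  | case3 m ih =>
    intro j hj x hx
    have mem : ∀ y ∈ CodeSpan (m + 1), ∀ r ≤ m + 1, y * Tword (seg m r) ∈ CodeSpan (m + 2) := by
      intro y hy r hr
      refine right_mem rfl ?_ hy
      rintro _ ⟨c, hc, rfl⟩
      exact Submodule.subset_span ⟨c ++ seg m r, List.mem_flatMap.2
        ⟨c, hc, List.mem_map.2 ⟨r, List.mem_range.2 (by omega), rfl⟩⟩, (Tword_append _ _).symm⟩
    have segT : ∀ r, Tword (seg m (r + 1)) = Tword (seg m r) * sg (m - r) false := fun r => by
      rw [seg, Tword_append]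
      congr 1
      simp [Tword, sg]
    have hs : ∀ i j, i + 1 < j → Commute (sg i false) (sg j false) := fun i j h =>
      sg_comm (Or.inl h) _ _
    refine right_mem rfl ?_ hx
    rintro _ ⟨c', hc', rfl⟩
    obtain ⟨c, hc, hr⟩ := List.mem_flatMap.1 hc'
    obtain ⟨r, hr', rfl⟩ := List.mem_map.1 hr
    rw [List.mem_range] at hr'
    have hcm : Tword c ∈ CodeSpan (m + 1) := Submodule.subset_span ⟨c, hc, rfl⟩
    rw [Tword_append, mul_assoc]
    rcases Nat.lt_or_ge (m + 1) (j + r) with h | h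
    · obtain ⟨j, rfl⟩ : ∃ j', j = j' + 1 := ⟨j - 1, by omega⟩
      have : Tword (seg m r) * sg (j + 1) false = sg j false * Tword (seg m r) :=
        seg_shift (s := fun i => sg i false) hs sg_braid (by omega) (by omega) (by omega)
      rw [this, ← mul_assoc]
      exact mem _ (ih _ (by omega) _ hcm) _ (by omega)
    rcases Nat.eq_or_lt_of_le h with h | h
    · obtain ⟨r, rfl⟩ : ∃ r', r = r' + 1 := ⟨r - 1, by omega⟩
      rw [segT, show m - r = j by omega, mul_assoc, sg_sq, mul_add, mul_one, mul_add,
        mul_smul_comm, mul_smul_comm]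
      refine add_mem (mem _ hcm _ (by omega)) (Submodule.smul_mem _ _ ?_)
      rw [show j = m - r by omega, ← segT]
      exact mem _ hcm _ (by omega)
    rcases Nat.eq_or_lt_of_le (Nat.le_of_lt_succ h) with h | h
    · rw [show j = m - r by omega, ← segT]
      exact mem _ hcm _ (by omega)
    · have : Tword (seg m r) * sg j false = sg j false * Tword (seg m r) :=
        seg_comm (s := fun i => sg i false) hs h
      rw [this, ← mul_assoc]
      exact mem _ (ih _ (by omega) _ hcm) _ (by omega)

lemma Hn_le_CodeSpan {n : ℕ} {x : Hplus} (hx : x ∈ Hn n) : x ∈ CodeSpan n := by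
  suffices ∀ y ∈ CodeSpan n, y * x ∈ CodeSpan n by simpa using this 1 (one_mem_CodeSpan n)
  refine Algebra.adjoin_induction (p := fun x _ => ∀ y ∈ CodeSpan n, y * x ∈ CodeSpan n)
    ?_ ?_ ?_ ?_ hx
  · rintro _ ⟨i, hi, rfl⟩ y hy
    exact CodeSpan_mul n i hi y hy
  · intro r y hy
    rw [Algebra.algebraMap_eq_smul_one, mul_smul_comm, mul_one]
    exact Submodule.smul_mem _ _ hy
  · intro a b _ _ ha hb y hy
    rw [mul_add]
    exact add_mem (ha y hy) (hb y hy)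
  · intro a b _ _ ha hb y hy
    rw [← mul_assoc]
    exact hb _ (ha y hy)

end Hecke
end SLD

namespace SLD

/-! ### A filtration by finite-dimensional subspaces -/

section Filtration

/-- The ordered product of the words `f i` at the sites `i < n`. -/
def PW (f : ℕ → List Bool) (n : ℕ) : Hplus := ((List.range n).map fun i => wordElem i (f i)).prod

/-- The assignments of words to the sites `i < n` of total length `d`. -/
def Ud (n d : ℕ) : Set (ℕ → List Bool) :=
  {f | (∀ j, n ≤ j → f j = []) ∧ ∑ j ∈ Finset.range n, (f j).length = d}

/-- The span of the products of `n` words of total length `d` with elements of the Hecke algebra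
of `S_n`. -/
def Qs (n d : ℕ) : Submodule Kfield Hplus :=
  Submodule.span Kfield {x | ∃ f ∈ Ud n d, ∃ z ∈ Hn n, x = PW f n * z}

lemma PW_succ (f : ℕ → List Bool) (n : ℕ) : PW f (n + 1) = PW f n * wordElem n (f n) := by
  rw [PW, List.range_succ, List.map_append, List.prod_append]
  simp [PW]

lemma PW_congr {f g : ℕ → List Bool} {n : ℕ} (H : ∀ i, i < n → f i = g i) : PW f n = PW g n := by
  induction n with
  | zero => rfl
  | succ n ih => rw [PW_succ, PW_succ, ih fun i hi => H i (by omega), H n (by omega)]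

lemma PW_cons (f : ℕ → List Bool) (b : Bool) (n : ℕ) :
    PW (Function.update f 0 (b :: f 0)) (n + 1) = letterElem 0 b * PW f (n + 1) := by
  induction n with
  | zero => rw [PW_succ, PW_succ]; simp [PW, wordElem_cons]
  | succ n ih =>
    rw [PW_succ, ih, PW_succ f (n + 1), mul_assoc, Function.update_of_ne (by omega)]

lemma Qs_letter_zero {n d : ℕ} (hn : 0 < n) (b : Bool) {x : Hplus} (hx : x ∈ Qs n d) :
    letterElem 0 b * x ∈ Qs n (d + 1) := by
  obtain ⟨n, rfl⟩ : ∃ n', n = n' + 1 := ⟨n - 1, by omega⟩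
  refine left_mem rfl ?_ hx
  rintro _ ⟨f, ⟨hf, hd⟩, z, hz, rfl⟩
  refine Submodule.subset_span ⟨Function.update f 0 (b :: f 0), ⟨fun j hj => ?_, ?_⟩, z, hz, ?_⟩
  · rw [Function.update_of_ne (by omega)]
    exact hf j hj
  · rw [Finset.sum_range_succ'] at hd ⊢
    simp
    omega
  · rw [PW_cons, mul_assoc]

/-- The product of the words at the `m` sites `i + 2, …, i + 1 + m`. -/
def RR (f : ℕ → List Bool) (i m : ℕ) : Hplus :=
  ((List.range m).map fun j => wordElem (i + 2 + j) (f (i + 2 + j))).prod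

lemma PW_split (f : ℕ → List Bool) (i m : ℕ) : PW f (i + 2 + m) =
    PW f i * (wordElem i (f i) * wordElem (i + 1) (f (i + 1))) * RR f i m := by
  induction m with
  | zero => simp [RR, PW_succ, mul_assoc]
  | succ m ih =>
    rw [← add_assoc, PW_succ, ih, RR, RR, List.range_succ, List.map_append, List.prod_append]
    simp [mul_assoc]

lemma sg_word {i j : ℕ} (h1 : j ≠ i) (h2 : j ≠ i + 1) (p : List Bool) :
    Commute (sg i false) (wordElem j p) := by
  refine Commute.list_prod_right _ _ fun y hy => ?_
  obtain ⟨b, -, rfl⟩ := List.mem_map.1 hy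
  exact sg_letter h1 h2 _ _

lemma sg_PW (f : ℕ → List Bool) (i : ℕ) : Commute (sg i false) (PW f i) := by
  refine Commute.list_prod_right _ _ fun y hy => ?_
  obtain ⟨j, hj, rfl⟩ := List.mem_map.1 hy
  rw [List.mem_range] at hj
  exact sg_word (by omega) (by omega) _

lemma sg_RR (f : ℕ → List Bool) (i m : ℕ) : Commute (sg i false) (RR f i m) := by
  refine Commute.list_prod_right _ _ fun y hy => ?_
  obtain ⟨j, hj, rfl⟩ := List.mem_map.1 hy
  exact sg_word (by omega) (by omega) _

lemma sum_split (g : ℕ → ℕ) (i m : ℕ) : ∑ j ∈ Finset.range (i + 2 + m), g j =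
    ∑ j ∈ Finset.range i, g j + (g i + g (i + 1)) + ∑ j ∈ Finset.range m, g (i + 2 + j) := by
  rw [Finset.sum_range_add, Finset.sum_range_succ, Finset.sum_range_succ]
  ring

/-- `T_i` preserves `Qs n d`, by straightening at the sites `i` and `i + 1`. -/
lemma Qs_T {n d i : ℕ} (hi : i + 1 < n) {x : Hplus} (hx : x ∈ Qs n d) :
    sg i false * x ∈ Qs n d := by
  obtain ⟨m, rfl⟩ : ∃ m, n = i + 2 + m := ⟨n - (i + 2), by omega⟩
  refine left_mem rfl ?_ hx
  rintro _ ⟨f, ⟨hf, hd⟩, z, hz, rfl⟩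
  rw [sum_split] at hd
  have h1 : wordElem i (f i) * wordElem (i + 1) (f (i + 1)) ∈
      N2 i ((f i).length + (f (i + 1)).length) :=
    Submodule.subset_span ⟨_, _, 1, rfl, Or.inl rfl, (mul_one _).symm⟩
  have h2 := (N2_straighten i _).1 _ h1
  have e : sg i false * (PW f (i + 2 + m) * z) = PW f i *
      (sg i false * (wordElem i (f i) * wordElem (i + 1) (f (i + 1)))) * (RR f i m * z) := by
    rw [PW_split]
    simp only [← mul_assoc]
    rw [(sg_PW f i).eq]
  rw [e]
  refine right_mem (V := (N2 i ((f i).length + (f (i + 1)).length)).map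
    (LinearMap.mulLeft Kfield (PW f i))) (Submodule.map_span _ _) ?_
    (Submodule.mem_map_of_mem h2)
  rintro _ ⟨_, ⟨p, q, y, hpq, hy, rfl⟩, rfl⟩
  rw [LinearMap.mulLeft_apply]
  have hfix : ∀ j, j ≠ i → j ≠ i + 1 → put i f (p, q) j = f j := fun j => put_ne f _
  have hR : RR (put i f (p, q)) i m = RR f i m := by
    refine congrArg List.prod (List.map_congr_left fun j _ => ?_)
    rw [hfix _ (by omega) (by omega)]
  have hL : PW (put i f (p, q)) i = PW f i := PW_congr fun j hj => hfix j (by omega) (by omega)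
  have hy' : y * RR f i m = RR f i m * y := by
    rcases hy with rfl | rfl
    · rw [one_mul, mul_one]
    · exact (sg_RR f i m).eq
  have hyz : y * z ∈ Hn (i + 2 + m) := by
    refine mul_mem ?_ hz
    rcases hy with rfl | rfl
    · exact one_mem _
    · exact sg_mem_Hn (by omega)
  refine Submodule.subset_span ⟨put i f (p, q), ⟨fun j hj => ?_, ?_⟩, y * z, hyz, ?_⟩
  · rw [hfix j (by omega) (by omega), hf j hj]
  · rw [sum_split, put_left, put_right, ← hd]
    congr 1
    · congr 1
      exact Finset.sum_congr rfl fun j hj => by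
        rw [Finset.mem_range] at hj
        rw [hfix _ (by omega) (by omega)]
    · exact Finset.sum_congr rfl fun j hj => by rw [hfix _ (by omega) (by omega)]
  · rw [PW_split, hR, hL, put_left, put_right]
    calc PW f i * (wordElem i p * wordElem (i + 1) q * y) * (RR f i m * z)
        = PW f i * (wordElem i p * wordElem (i + 1) q) * (y * RR f i m) * z := by
          simp only [mul_assoc]
      _ = _ := by rw [hy']; simp only [mul_assoc]

lemma Qs_sg {n d i : ℕ} (hi : i + 1 < n) (b : Bool) {x : Hplus} (hx : x ∈ Qs n d) :
    sg i b * x ∈ Qs n d := by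
  rw [sg_eq, sub_mul, smul_mul_assoc, one_mul]
  exact sub_mem (Qs_T hi hx) (Submodule.smul_mem _ _ hx)

lemma Qs_letter {n d i : ℕ} (hi : i < n) (b : Bool) {x : Hplus} (hx : x ∈ Qs n d) :
    letterElem i b * x ∈ Qs n (d + 1) := by
  induction i generalizing x with
  | zero => exact Qs_letter_zero hi b hx
  | succ i ih =>
    rw [letter_succ, mul_assoc, mul_assoc]
    exact Qs_sg hi b (ih (by omega) (Qs_sg hi b hx))

lemma Qs_mono {n n' d : ℕ} (hn : n ≤ n') : Qs n d ≤ Qs n' d := by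
  induction n', hn using Nat.le_induction with
  | base => exact le_rfl
  | succ n' hn ih =>
    refine ih.trans (Submodule.span_le.2 ?_)
    rintro _ ⟨f, ⟨hf, hd⟩, z, hz, rfl⟩
    refine Submodule.subset_span ⟨f, ⟨fun j hj => hf j (by omega), ?_⟩, z,
      Hn_mono (Nat.le_succ _) hz, ?_⟩
    · rw [Finset.sum_range_succ, hf n' le_rfl, hd]; rfl
    · rw [PW_succ, hf n' le_rfl, wordElem_nil, mul_one]

lemma one_mem_Qs (n : ℕ) : (1 : Hplus) ∈ Qs n 0 := by
  refine Submodule.subset_span ⟨fun _ => [], ⟨fun _ _ => rfl, by simp⟩, 1, one_mem _, ?_⟩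
  rw [mul_one, PW]
  simp [wordElem_nil]

/-- The contribution of a generator to the degree. -/
def gdeg : HGen → ℕ
  | HGen.T _ => 0
  | HGen.T' _ => 0
  | HGen.X _ => 1
  | HGen.Y _ => 1

/-- The generators acting on the first `n` sites. -/
def gok (n : ℕ) : HGen → Prop
  | HGen.T i => i + 1 < n
  | HGen.T' i => i + 1 < n
  | HGen.X i => i < n
  | HGen.Y i => i < n

lemma Qs_gen {n d : ℕ} {g : HGen} (hg : gok n g) {x : Hplus} (hx : x ∈ Qs n d) :
    gen g * x ∈ Qs n (gdeg g + d) := by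
  cases g with
  | T i => rw [gdeg, zero_add]; exact Qs_sg hg false hx
  | T' i => rw [gdeg, zero_add]; exact Qs_sg hg true hx
  | X i => rw [gdeg, add_comm]; exact Qs_letter hg true hx
  | Y i => rw [gdeg, add_comm]; exact Qs_letter hg false hx

lemma Qs_list {n : ℕ} (l : List HGen) (hl : ∀ g ∈ l, gok n g) :
    (l.map gen).prod ∈ Qs n (l.map gdeg).sum := by
  induction l with
  | nil => exact one_mem_Qs n
  | cons g l ih =>
    simp only [List.map_cons, List.prod_cons, List.sum_cons]
    exact Qs_gen (hl g List.mem_cons_self) (ih fun g hg => hl g (List.mem_cons_of_mem _ hg))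

/-- The subspaces `Qs n d` together span `H⁺`. -/
lemma iSup_Qs : ⨆ p : ℕ × ℕ, Qs p.1 p.2 = ⊤ := by
  set R := ⨆ p : ℕ × ℕ, Qs p.1 p.2 with hR
  have hle : ∀ n d, Qs n d ≤ R := fun n d => le_iSup (fun p : ℕ × ℕ => Qs p.1 p.2) (n, d)
  have hgen : ∀ g, ∀ x ∈ R, gen g * x ∈ R := by
    intro g x hx
    have hR' : R ≤ R.comap (LinearMap.mulLeft Kfield (gen g)) := by
      rw [hR, iSup_le_iff]
      rintro ⟨n, d⟩ x hx
      obtain ⟨n', hn', hg⟩ : ∃ n', n ≤ n' ∧ gok n' g := by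
        cases g with
        | _ i => exact ⟨n + i + 2, by omega, by simp only [gok]; omega⟩
      exact hle _ _ (Qs_gen hg (Qs_mono hn' hx))
    exact hR' hx
  rw [eq_top_iff]
  rintro x -
  obtain ⟨x, rfl⟩ := RingQuot.mkAlgHom_surjective Kfield HRel x
  suffices ∀ y ∈ R, RingQuot.mkAlgHom Kfield HRel x * y ∈ R by
    simpa using this 1 (hle 0 0 (one_mem_Qs 0))
  induction x using FreeAlgebra.induction with
  | grade0 r =>
    intro y hy
    rw [AlgHom.commutes, ← Algebra.smul_def]
    exact R.smul_mem _ hy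
  | grade1 g => exact hgen g
  | mul a b ha hb =>
    intro y hy
    rw [map_mul, mul_assoc]
    exact ha _ (hb y hy)
  | add a b ha hb =>
    intro y hy
    rw [map_add, add_mul]
    exact add_mem (ha y hy) (hb y hy)

lemma finite_Ud (n d : ℕ) : (Ud n d).Finite := by
  have hfin : Finite {l : List Bool // l.length ≤ d} := (List.finite_length_le Bool d).to_subtype
  have hlen : ∀ f : Ud n d, ∀ i : Fin n, (f.1 i).length ≤ d := fun f i =>
    (Finset.single_le_sum (f := fun j => (f.1 j).length) (fun _ _ => Nat.zero_le _)
      (Finset.mem_range.2 i.2)).trans_eq f.2.2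
  refine Set.finite_coe_iff.1 (Finite.of_injective (fun (f : Ud n d) (i : Fin n) =>
    (⟨f.1 i, hlen f i⟩ : {l : List Bool // l.length ≤ d})) fun f g H => ?_)
  refine Subtype.ext (funext fun j => ?_)
  rcases Nat.lt_or_ge j n with hj | hj
  · exact congrArg Subtype.val (congrFun H ⟨j, hj⟩)
  · rw [f.2.1 j hj, g.2.1 j hj]

instance (n d : ℕ) : Fintype (Ud n d) := (finite_Ud n d).fintype

/-- The words times the standard basis of the Hecke algebra span `Qs n d`. -/
lemma Qs_le_span (n d : ℕ) : Qs n d ≤ Submodule.span Kfield (Set.range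
    fun p : Ud n d × Fin (Code n).length => PW p.1.1 n * Tword ((Code n).get p.2)) := by
  refine Submodule.span_le.2 ?_
  rintro _ ⟨f, hf, z, hz, rfl⟩
  refine left_mem rfl ?_ (Hn_le_CodeSpan hz)
  rintro _ ⟨c, hc, rfl⟩
  obtain ⟨i, rfl⟩ := List.get_of_mem hc
  exact Submodule.subset_span ⟨(⟨f, hf⟩, i), rfl⟩

instance (n d : ℕ) : FiniteDimensional Kfield (Qs n d) :=
  have := FiniteDimensional.span_of_finite Kfield (Set.finite_range
    fun p : Ud n d × Fin (Code n).length => PW p.1.1 n * Tword ((Code n).get p.2))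
  Submodule.finiteDimensional_of_le (Qs_le_span n d)

lemma finrank_Qs (n d : ℕ) :
    Module.finrank Kfield (Qs n d) ≤ Fintype.card (Ud n d) * n.factorial := by
  have := FiniteDimensional.span_of_finite Kfield (Set.finite_range
    fun p : Ud n d × Fin (Code n).length => PW p.1.1 n * Tword ((Code n).get p.2))
  refine (Submodule.finrank_mono (Qs_le_span n d)).trans ((finrank_range_le_card _).trans ?_)
  rw [Fintype.card_prod, Fintype.card_fin, length_Code]

end Filtration

/-! ### The three families span -/

section Spanning

/-- A permutation of the first `n` sites, as a finitary permutation of `ℕ`. -/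
def finPerm {n : ℕ} (σ : Equiv.Perm (Fin n)) : FinPerm :=
  ⟨σ.extendDomain Fin.equivSubtype, (Set.finite_lt_nat n).subset fun i hi => by
    by_contra h
    exact hi (Equiv.Perm.extendDomain_apply_not_subtype _ _ h)⟩

lemma finPerm_fix {n : ℕ} (σ : Equiv.Perm (Fin n)) {i : ℕ} (hi : n ≤ i) : (finPerm σ).1 i = i :=
  Equiv.Perm.extendDomain_apply_not_subtype _ _ (not_lt.2 hi)

lemma finPerm_injective (n : ℕ) : Function.Injective (finPerm (n := n)) := fun _ _ H =>
  Equiv.Perm.extendDomainHom_injective Fin.equivSubtype (congrArg Subtype.val H)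

/-- An element of `Ud n d` as a finitely supported function. -/
def toFs {n d : ℕ} (f : Ud n d) : ℕ →₀ List Bool :=
  Finsupp.onFinset (Finset.range n) f.1 fun i hi => by
    by_contra h
    exact hi (f.2.1 i (by simpa using h))

lemma toFs_injective (n d : ℕ) : Function.Injective (toFs (n := n) (d := d)) := fun _ _ H =>
  Subtype.ext (funext fun i => DFunLike.congr_fun H i)

lemma sites_sum {n d : ℕ} (f : Ud n d) :
    ((sites (toFs f)).map fun i => (toFs f i).length).sum = d := by
  have hz : ∀ i, i ∉ (toFs f).support → (toFs f i).length = 0 := fun i hi => by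
    rw [Finsupp.notMem_support_iff.1 hi]; rfl
  have h1 : ((sites (toFs f)).map fun i => (toFs f i).length).sum =
      ∑ i ∈ Finset.range ((toFs f).support.sup id + 1), (toFs f i).length := rfl
  rw [h1]
  refine Eq.trans ?_ f.2.2
  rw [← Finset.sum_subset (s₁ := (toFs f).support) ?_ fun i _ hi => hz i hi]
  · exact Finset.sum_subset (s₁ := (toFs f).support) Finsupp.support_onFinset_subset
      fun i _ hi => hz i hi
  · intro i hi
    exact Finset.mem_range.2 (Nat.lt_succ_of_le (Finset.le_sup (f := id) hi))

variable {rw' : FinPerm → List ℕ}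

lemma spell_gdeg (u : ℕ → List Bool) (L : List ℕ) :
    ((spell u L).map gdeg).sum = (L.map fun i => (u i).length).sum := by
  induction L with
  | nil => rfl
  | cons i L ih =>
    rw [spell, List.flatMap_cons, List.map_append, List.sum_append, ← spell, ih, List.map_cons,
      List.sum_cons]
    congr 1
    induction u i with
    | nil => rfl
    | cons b p ihp =>
      rw [List.map_cons, List.map_cons, List.sum_cons, ihp]
      cases b <;> simp [letter, gdeg, add_comm]

lemma spell_gok {n d : ℕ} (f : Ud n d) (L : List ℕ) : ∀ g ∈ spell (toFs f) L, gok n g := by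
  intro g hg
  obtain ⟨i, -, hg⟩ := List.mem_flatMap.1 hg
  obtain ⟨b, hb, rfl⟩ := List.mem_map.1 hg
  have hi : i < n := by
    by_contra h
    rw [show toFs f i = [] from f.2.1 i (not_lt.1 h)] at hb
    simp at hb
  cases b <;> exact hi

lemma T_gdeg (l : List ℕ) : ((l.map HGen.T).map gdeg).sum = 0 := by
  induction l with
  | nil => rfl
  | cons i l ih => simpa [gdeg] using ih

variable (hrw_eq : ∀ w : FinPerm, wordPerm (rw' w) = w.1)
  (hrw_red : ∀ w : FinPerm, ∀ l : List ℕ, wordPerm l = w.1 → (rw' w).length ≤ l.length)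
include hrw_eq hrw_red

lemma T_gok {n : ℕ} (σ : Equiv.Perm (Fin n)) : ∀ g ∈ (rw' (finPerm σ)).map HGen.T, gok n g := by
  intro g hg
  obtain ⟨i, hi, rfl⟩ := List.mem_map.1 hg
  refine reduced_letters (fun j hj => ?_) (fun l' hl' => ?_) i hi
  · rw [hrw_eq, finPerm_fix σ hj]
  · rw [hrw_eq] at hl'
    exact hrw_red _ _ hl'

lemma stdWord_mem {n d : ℕ} (f : Ud n d) (σ : Equiv.Perm (Fin n)) (c : Fin 3) :
    stdWord rw' (toFs f, finPerm σ) c ∈ Qs n d := by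
  rw [stdWord_eq]
  have hrev : (((sites (toFs f)).reverse).map fun i => (toFs f i).length).sum = d := by
    rw [List.map_reverse, List.sum_reverse, sites_sum]
  have hd : ((spell3 rw' (toFs f, finPerm σ) c).map gdeg).sum = d := by
    fin_cases c <;>
    simp only [spell3, List.map_append, List.sum_append, spell_gdeg, T_gdeg, sites_sum, hrev,
      add_zero, zero_add]
  have hok : ∀ g ∈ spell3 rw' (toFs f, finPerm σ) c, gok n g := by
    have h1 := T_gok hrw_eq hrw_red σ
    have h2 := spell_gok f
    intro g hg
    fin_cases c <;> rcases List.mem_append.1 hg with hg | hg <;>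
      first | exact h1 g hg | exact h2 _ g hg
  have := Qs_list _ hok
  rwa [hd] at this

/-- Inside `Qs n d` there are `|Ud n d| * n!` independent standard words, which is an upper bound for
the dimension, so they span it. -/
lemma stdWord_span (c : Fin 3) : Submodule.span Kfield
    (Set.range fun p : (ℕ →₀ List Bool) × FinPerm => stdWord rw' p c) = ⊤ := by
  rw [eq_top_iff, ← iSup_Qs, iSup_le_iff]
  rintro ⟨n, d⟩
  let j : Ud n d × Equiv.Perm (Fin n) → (ℕ →₀ List Bool) × FinPerm :=
    Prod.map toFs finPerm
  have hj : Function.Injective j := (toFs_injective n d).prodMap (finPerm_injective n)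
  have hind := (stdWord_indep rw' hrw_eq c).comp j hj
  have hle : Submodule.span Kfield
      (Set.range ((fun p : (ℕ →₀ List Bool) × FinPerm => stdWord rw' p c) ∘ j)) ≤ Qs n d := by
    rw [Submodule.span_le]
    rintro _ ⟨⟨f, σ⟩, rfl⟩
    exact stdWord_mem hrw_eq hrw_red f σ c
  have heq := Submodule.eq_of_le_of_finrank_le hle (by
    rw [finrank_span_eq_card hind, Fintype.card_prod, Fintype.card_perm, Fintype.card_fin]
    exact finrank_Qs n d)
  rw [← heq]
  exact Submodule.span_mono (Set.range_comp_subset_range _ _)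

end Spanning
end SLD

/-- Each of the three families `u_k ⋯ u₂ u₁ T_w`, `T_w u₁ u₂ ⋯ u_k`, `T_w u_k ⋯ u₂ u₁`,
indexed without repetition by pairs `(u, w)` with `u` a finitely supported assignment of a
word in `{X_i, Y_i}` to each `i` and `w` a finitary permutation, is a `K`-vector-space basis
of `H⁺` (it is linearly independent and spans). `rw` is a fixed choice of reduced
expressions. -/
theorem statement2 (rw : FinPerm → List ℕ)
    (hrw_eq : ∀ w : FinPerm, wordPerm (rw w) = w.1)
    (hrw_red : ∀ w : FinPerm, ∀ l : List ℕ, wordPerm l = w.1 → (rw w).length ≤ l.length) :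
    (LinearIndependent Kfield
        (fun p : (ℕ →₀ List Bool) × FinPerm => stdWordI rw p.1 p.2) ∧
      Submodule.span Kfield
        (Set.range (fun p : (ℕ →₀ List Bool) × FinPerm => stdWordI rw p.1 p.2)) = ⊤) ∧
    (LinearIndependent Kfield
        (fun p : (ℕ →₀ List Bool) × FinPerm => stdWordII rw p.1 p.2) ∧
      Submodule.span Kfield
        (Set.range (fun p : (ℕ →₀ List Bool) × FinPerm => stdWordII rw p.1 p.2)) = ⊤) ∧
    (LinearIndependent Kfield
        (fun p : (ℕ →₀ List Bool) × FinPerm => stdWordIII rw p.1 p.2) ∧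
      Submodule.span Kfield
        (Set.range (fun p : (ℕ →₀ List Bool) × FinPerm => stdWordIII rw p.1 p.2)) = ⊤) := by
  exact ⟨⟨SLD.stdWord_indep rw hrw_eq 0, SLD.stdWord_span hrw_eq hrw_red 0⟩,
    ⟨SLD.stdWord_indep rw hrw_eq 1, SLD.stdWord_span hrw_eq hrw_red 1⟩,
    ⟨SLD.stdWord_indep rw hrw_eq 2, SLD.stdWord_span hrw_eq hrw_red 2⟩⟩

end
end

section
/- Let ℓ ≥ 1, s ≥ 0, and N > ℓ + s. Let d₁, d₂, …, d_ℓ be distinct elements of {N−(ℓ+s−1), …, N−1, N} with d_ℓ = N, and let σ be the (ℓ+1)-cycle (1, N, d_{ℓ−1}, …, d₁) of {1,…,N} (so σ(1) = N, σ(N) = d_{ℓ−1}, σ(d_i) = d_{i−1} for 2 ≤ i ≤ ℓ−1, and σ(d₁) = 1; for ℓ = 1, σ is the transposition (1, N)). Let c be the N-cycle with c(1) = N and c(j) = j−1 for 2 ≤ j ≤ N, and set ρ := σ·c⁻¹. Then ρ(N) = N and inv(σ) = inv(ρ) + (N−1); equivalently, σ has a reduced expression of the form ρ·s_{N−1}s_{N−2}⋯s_1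 with ρ in the subgroup fixing N. -/
/-!
The proof rests on `σ 0 = N - 1` (points are 0-based). Every pair `(0, b)` with `b ≠ 0` is an inversion of `σ`,
since `σ 0` is the maximum; there are `N - 1` of these. The remaining inversions of `σ` correspond
to those of `ρ = σ c⁻¹` under `(a, b) ↦ (c a, c b)`: the map `c` shifts the nonzero points down by
one, hence preserves their order, and `ρ (c x) = σ x`. The point `N - 1 = c 0` is fixed by `ρ`, so
it takes part in no inversion of `ρ` and nothing is missed.
-/

/-!
STATEMENT 9.  Permutations of `{1, …, N}` are realized as `Equiv.Perm (Fin N)` with 0-based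
points: the paper's point `j ∈ {1, …, N}` is `j - 1 : Fin N`.  The paper's
`d₁, …, d_ℓ ∈ {N−(ℓ+s−1), …, N}` become `d : Fin ℓ → Fin N` (injective) with values
`≥ N − (ℓ + s)` (0-based) and `d (ℓ-1) = N - 1`.
-/

/-- The number of inversions of a permutation of `Fin N`. -/
def invCount {N : ℕ} (w : Equiv.Perm (Fin N)) : ℕ :=
  (Finset.univ.filter (fun p : Fin N × Fin N => p.1 < p.2 ∧ w p.2 < w p.1)).card

/-- Let `ℓ ≥ 1`, `s ≥ 0`, `N > ℓ + s`; let `d₁, …, d_ℓ` be distinct elements of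
`{N−(ℓ+s−1), …, N}` with `d_ℓ = N`, and let `σ` be the `(ℓ+1)`-cycle `(1, N, d_{ℓ−1}, …, d₁)`
(so `σ(1) = N`, `σ(d_i) = d_{i−1}` for `2 ≤ i ≤ ℓ`, `σ(d₁) = 1`, all other points fixed).
Let `c` be the `N`-cycle with `c(1) = N` and `c(j) = j − 1` for `2 ≤ j ≤ N`, and set
`ρ := σ·c⁻¹`.  Then `ρ(N) = N` and `inv(σ) = inv(ρ) + (N − 1)`; equivalently, `σ` has a
reduced expression `ρ·s_{N−1}⋯s_1` with `ρ` fixing `N`. -/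
theorem statement9 (N ℓ s : ℕ) (hℓ : 1 ≤ ℓ) (hN : ℓ + s < N)
    (d : Fin ℓ → Fin N) (hinj : Function.Injective d)
    (hrange : ∀ i : Fin ℓ, N - (ℓ + s) ≤ (d i : ℕ))
    (hlast : (d ⟨ℓ - 1, by omega⟩ : ℕ) = N - 1)
    (σ c : Equiv.Perm (Fin N))
    (hσ1 : (σ ⟨0, by omega⟩ : ℕ) = N - 1)
    (hσd : ∀ i : Fin ℓ, 0 < (i : ℕ) →
      σ (d i) = d ⟨(i : ℕ) - 1, by have := i.isLt; omega⟩)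
    (hσd0 : (σ (d ⟨0, by omega⟩) : ℕ) = 0)
    (hσfix : ∀ x : Fin N, (x : ℕ) ≠ 0 → (∀ i : Fin ℓ, x ≠ d i) → σ x = x)
    (hc0 : (c ⟨0, by omega⟩ : ℕ) = N - 1)
    (hc : ∀ j : Fin N, 0 < (j : ℕ) → (c j : ℕ) = (j : ℕ) - 1) :
    (σ * c⁻¹) ⟨N - 1, by omega⟩ = ⟨N - 1, by omega⟩ ∧
      invCount σ = invCount (σ * c⁻¹) + (N - 1) := by
  have h_c0 : c ⟨0, by omega⟩ = ⟨N - 1, by omega⟩ := Fin.ext hc0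
  have h_ρ : ∀ x, (σ * c⁻¹) (c x) = σ x := fun x => by simp
  have h_last : (σ * c⁻¹) ⟨N - 1, by omega⟩ = ⟨N - 1, by omega⟩ := by
    rw [← h_c0, h_ρ, h_c0]
    exact Fin.ext hσ1
  refine ⟨h_last, ?_⟩
  generalize hρ : σ * c⁻¹ = ρ at *
  unfold invCount
  -- Split the inversions of `σ` by whether they involve the point `0`.
  rw [← Finset.card_filter_add_card_filter_not (fun p : Fin N × Fin N => (p.1 : ℕ) = 0),
    Nat.add_comm]
  congr 1
  · refine Finset.card_bij (fun p _ => (c p.1, c p.2)) ?_ ?_ ?_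
    · rintro ⟨a, b⟩ h
      simp only [Finset.mem_filter, Finset.mem_univ, true_and, h_ρ] at h ⊢
      refine ⟨?_, h.1.2⟩
      have h1 := h.1.1
      have ha := hc a (by omega)
      have hb := hc b (by omega)
      omega
    · rintro ⟨a, b⟩ - ⟨a', b'⟩ - h
      simpa using h
    · rintro ⟨a, b⟩ h
      obtain ⟨a, rfl⟩ := c.surjective a
      obtain ⟨b, rfl⟩ := c.surjective b
      simp only [Finset.mem_filter, Finset.mem_univ, true_and, h_ρ] at h
      refine ⟨(a, b), ?_, rfl⟩
      simp only [Finset.mem_filter, Finset.mem_univ, true_and]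
      obtain ⟨h1, h2⟩ := h
      -- `c 0` is the maximum, so `c a < c b` excludes `a = 0`; since `σ 0` is the maximum,
      -- `σ b < σ a` excludes `b = 0`.
      have ha : (a : ℕ) ≠ 0 := by
        intro h0
        have : a = ⟨0, by omega⟩ := Fin.ext h0
        rw [this] at h1
        have := (c b).isLt
        omega
      have hb : (b : ℕ) ≠ 0 := by
        intro h0
        have : b = ⟨0, by omega⟩ := Fin.ext h0
        rw [this] at h2
        have := (σ a).isLt
        omega
      have hca := hc a (by omega)
      have hcb := hc b (by omega)
      exact ⟨⟨by omega, h2⟩, ha⟩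
  · have h_card : (Finset.univ.erase (⟨0, by omega⟩ : Fin N)).card = N - 1 := by
      simp
    rw [← h_card]
    refine Finset.card_bij (fun p _ => p.2) ?_ ?_ ?_
    · rintro ⟨a, b⟩ h
      simp only [Finset.mem_filter, Finset.mem_univ, true_and] at h
      simp only [Finset.mem_erase, Finset.mem_univ, and_true]
      rintro rfl
      have h1 := h.1.1
      simp [Fin.lt_def] at h1
    · rintro ⟨a, b⟩ h ⟨a', b'⟩ h' hb
      simp only [Finset.mem_filter] at h h'
      exact Prod.ext (Fin.ext (h.2.trans h'.2.symm)) hb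
    · intro b hb
      simp only [Finset.mem_erase, Finset.mem_univ, and_true, ne_eq, Fin.ext_iff] at hb
      refine ⟨(⟨0, by omega⟩, b), ?_, rfl⟩
      simp only [Finset.mem_filter, Finset.mem_univ, true_and, and_true, Fin.lt_def, hσ1]
      -- `σ b ≠ σ 0 = N - 1` by injectivity, hence `σ b < N - 1`.
      have hne : (σ b : ℕ) ≠ N - 1 := by
        intro h
        have := σ.injective (Fin.ext (h.trans hσ1.symm))
        exact hb (congrArg Fin.val this)
      have := (σ b).isLt
      omega
end
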